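/- arXiv:1404.4856 — 3 statements merged into one kernel-verified Lean document; each statement's English description precedes it below -/
import Mathlib

section
/- In every interval liminf game (G, I), where I is a finite union of integer intervals, positional strategies suffice: if Eve has a winning strategy then she has a positional winning strategy, and if Adam has a winning strategy then he has a positional winning strategy. -/
/-!
A player's positional strategy on a region they never have to leave is encoded as a subgraph: the
moves it allows. Strategies on overlapping regions are glued along a well-order, each vertex
following the first strategy defined at it. The index of the strategy in use can only drop along a
play, so it is eventually constant, and since the payoff depends only on tails of plays, the glued
strategy wins whenever its parts do. In particular each player has a largest region won by a
positional strategy.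

Positional determinacy follows by induction on the finite set of weights. Let `p` be the least
weight, and call Protagonist the player who wins the plays of payoff `p`. Remove the opponent's
largest winning region `C`. In what remains, let `A` be the set of vertices from which Protagonist
can force an edge of weight `p`, and remove `A` and all edges of weight `p`. The opponent wins
nowhere in this smaller game, as that would enlarge `C`, so by induction Protagonist has a
positional strategy on all of it. Following this strategy outside `A`, and forcing `p` inside `A`,
Protagonist wins everywhere outside `C`: either `p` recurs forever, or the play finally stays in the
smaller game.
-/

open Filter

/-- A game graph: vertex set `V`, Eve's vertices `Eve`, edge relation `E` (every vertex
has a successor), integer weight function `w`, and initial vertex `init`. -/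
structure GameGraph (V : Type) where
  Eve : Set V
  E : V → V → Prop
  w : V → V → ℤ
  init : V
  succ : ∀ v, ∃ u, E v u

namespace GameGraph

variable {V : Type}

/-- `π` is a play starting at vertex `v`. -/
def IsPlayFrom (G : GameGraph V) (v : V) (π : ℕ → V) : Prop :=
  π 0 = v ∧ ∀ i, G.E (π i) (π (i + 1))

/-- `π` is a play (from the initial vertex). -/
def IsPlay (G : GameGraph V) (π : ℕ → V) : Prop :=
  G.IsPlayFrom G.init π

/-- The prefix `π 0, …, π i` of a play, as a list. -/
def prefixList (π : ℕ → V) (i : ℕ) : List V :=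
  List.ofFn (fun j : Fin (i + 1) => π j)

/-- A (history-based) strategy for Eve is legal if it always proposes a successor
of the current (Eve) vertex. -/
def EveLegal (G : GameGraph V) (σ : List V → V) : Prop :=
  ∀ (l : List V) (v : V), v ∈ G.Eve → G.E v (σ (l ++ [v]))

/-- A (history-based) strategy for Adam is legal if it always proposes a successor
of the current (Adam) vertex. -/
def AdamLegal (G : GameGraph V) (σ : List V → V) : Prop :=
  ∀ (l : List V) (v : V), v ∉ G.Eve → G.E v (σ (l ++ [v]))

/-- The play `π` is consistent with Eve's strategy `σ`. -/
def ConsEve (G : GameGraph V) (σ : List V → V) (π : ℕ → V) : Prop :=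
  ∀ i, π i ∈ G.Eve → π (i + 1) = σ (prefixList π i)

/-- The play `π` is consistent with Adam's strategy `σ`. -/
def ConsAdam (G : GameGraph V) (σ : List V → V) (π : ℕ → V) : Prop :=
  ∀ i, π i ∉ G.Eve → π (i + 1) = σ (prefixList π i)

/-- Eve has a winning strategy for the objective `Win`. -/
def EveWins (G : GameGraph V) (Win : (ℕ → V) → Prop) : Prop :=
  ∃ σ : List V → V, G.EveLegal σ ∧ ∀ π, G.IsPlay π → G.ConsEve σ π → Win π

/-- Adam has a winning strategy: he can ensure the objective `Win` of Eve fails. -/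
def AdamWins (G : GameGraph V) (Win : (ℕ → V) → Prop) : Prop :=
  ∃ σ : List V → V, G.AdamLegal σ ∧ ∀ π, G.IsPlay π → G.ConsAdam σ π → ¬ Win π

/-- Consistency with a positional Eve strategy. -/
def ConsEvePos (G : GameGraph V) (f : V → V) (π : ℕ → V) : Prop :=
  ∀ i, π i ∈ G.Eve → π (i + 1) = f (π i)

/-- Consistency with a positional Adam strategy. -/
def ConsAdamPos (G : GameGraph V) (f : V → V) (π : ℕ → V) : Prop :=
  ∀ i, π i ∉ G.Eve → π (i + 1) = f (π i)

/-- Eve has a positional (memoryless) winning strategy. -/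
def EveWinsPos (G : GameGraph V) (Win : (ℕ → V) → Prop) : Prop :=
  ∃ f : V → V, (∀ v ∈ G.Eve, G.E v (f v)) ∧
    ∀ π, G.IsPlay π → G.ConsEvePos f π → Win π

/-- Adam has a positional (memoryless) winning strategy. -/
def AdamWinsPos (G : GameGraph V) (Win : (ℕ → V) → Prop) : Prop :=
  ∃ f : V → V, (∀ v, v ∉ G.Eve → G.E v (f v)) ∧
    ∀ π, G.IsPlay π → G.ConsAdamPos f π → ¬ Win π

/-- The run of the memory structure `(δ, m)` of a finite-state machine while
reading the play `π`: after `i` steps it has read `π 0, …, π (i-1)`. -/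
def memRun {M : Type} (δ : M → V → M) (m : M) (π : ℕ → V) : ℕ → M
  | 0 => m
  | i + 1 => δ (memRun δ m π i) (π i)

/-- Consistency of a play with the finite-memory strategy given by the machine
`(m0, δ, o)`: at step `i`, the machine has memory `memRun δ m0 π i` (having read
`π 0, …, π (i-1)`) and outputs the move `o (memRun δ m0 π i) (π i)`. -/
def ConsEveFM (G : GameGraph V) {M : Type} (m0 : M) (δ : M → V → M)
    (o : M → V → V) (π : ℕ → V) : Prop :=
  ∀ i, π i ∈ G.Eve → π (i + 1) = o (memRun δ m0 π i) (π i)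

/-- Eve has a finite-memory winning strategy, i.e. one computed by a
finite-state machine. -/
def EveWinsFM (G : GameGraph V) (Win : (ℕ → V) → Prop) : Prop :=
  ∃ (M : Type) (_ : Fintype M) (m0 : M) (δ : M → V → M) (o : M → V → V),
    (∀ m, ∀ v ∈ G.Eve, G.E v (o m v)) ∧
    ∀ π, G.IsPlay π → G.ConsEveFM m0 δ o π → Win π

/-- The total weight `w(π[..k])` of the length-`k` prefix of a play. -/
def partialSum (G : GameGraph V) (π : ℕ → V) (k : ℕ) : ℤ :=
  ∑ i ∈ Finset.range k, G.w (π i) (π (i + 1))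

/-- The (liminf) mean-payoff of a play. -/
noncomputable def MP (G : GameGraph V) (π : ℕ → V) : ℝ :=
  liminf (fun k => (G.partialSum π k : ℝ) / (k : ℝ)) atTop

/-- The liminf payoff of a play, in the extended reals. -/
noncomputable def liminfPayoff (G : GameGraph V) (π : ℕ → V) : EReal :=
  liminf (fun i => ((G.w (π i) (π (i + 1)) : ℝ) : EReal)) atTop

/-- The total-sum payoff of a play, in the extended reals. -/
noncomputable def totalPayoff (G : GameGraph V) (π : ℕ → V) : EReal :=
  liminf (fun k => ((G.partialSum π k : ℝ) : EReal)) atTop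

/-- The discounted sum of a play, with discount factor `lam`. -/
noncomputable def DS (G : GameGraph V) (lam : ℝ) (π : ℕ → V) : ℝ :=
  ∑' i : ℕ, lam ^ i * (G.w (π i) (π (i + 1)) : ℝ)

/-- A play of a (min-)parity game is winning for Eve iff the minimal priority
occurring infinitely often is even. -/
def ParityWin (Ω : V → ℕ) (π : ℕ → V) : Prop :=
  ∃ p, Even p ∧ (∀ N, ∃ k, N ≤ k ∧ Ω (π k) = p) ∧
    ∀ q, (∀ N, ∃ k, N ≤ k ∧ Ω (π k) = q) → p ≤ q

end GameGraph

namespace LiminfGame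

universe u

variable {V : Type u} {β : Type*} [CompleteLinearOrder β]

/-! ### Paths and payoffs -/

/-- The vertices with an outgoing edge. A subgame is encoded by its edges alone, so these are the
vertices that belong to it. -/
def live (R : V → V → Prop) : Set V :=
  {v | ∃ u, R v u}

/-- No edge of `R` leads to a dead end. Vertices without any outgoing edge may exist, but they lie
outside the game. -/
def DeadEndFree (R : V → V → Prop) : Prop :=
  ∀ ⦃v u⦄, R v u → u ∈ live R

/-- An infinite path of the graph with edges `R`. -/
def IsPath (R : V → V → Prop) (π : ℕ → V) : Prop :=
  ∀ i, R (π i) (π (i + 1))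

/-- The liminf of the weights along `π`, for weights in any complete linear order. -/
def payoff (w : V → V → β) (π : ℕ → V) : β :=
  liminf (fun i => w (π i) (π (i + 1))) atTop

theorem payoff_nat_add (w : V → V → β) (π : ℕ → V) (n : ℕ) :
    payoff w (fun i => π (i + n)) = payoff w π := by
  simpa only [payoff, Nat.add_right_comm] using
    liminf_nat_add (fun i => w (π i) (π (i + 1))) n

theorem payoff_eq_of_frequently_eq {w : V → V → β} {π : ℕ → V} {p : β}
    (hle : ∀ i, p ≤ w (π i) (π (i + 1))) (hp : ∃ᶠ i in atTop, w (π i) (π (i + 1)) = p) :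
    payoff w π = p :=
  le_antisymm (liminf_le_of_frequently_le' (hp.mono fun _ => le_of_eq))
    (le_liminf_of_le (by isBoundedDefault) (Eventually.of_forall hle))

/-! ### Attractors -/

section Attractor

variable {R K T : V → V → Prop} {P : Set V} {v u : V}

/-- Controllable predecessors: the vertices where the player owning `P` can make sure that the next
edge is in `K`. -/
def cpre (R : V → V → Prop) (P : Set V) (K : V → V → Prop) : Set V :=
  {v | (∃ u, R v u ∧ K v u) ∧ (v ∉ P → ∀ u, R v u → K v u)}

theorem mem_cpre_mono {K K' : V → V → Prop} (h : ∀ u, K v u → K' v u) (hv : v ∈ cpre R P K) :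
    v ∈ cpre R P K' :=
  ⟨hv.1.imp fun u hu => ⟨hu.1, h u hu.2⟩, fun hvP u hu => h u (hv.2 hvP u hu)⟩

theorem exists_not_of_notMem_cpre (hv : v ∈ live R) (h : v ∉ cpre R P K) :
    ∃ u, R v u ∧ ¬ K v u := by
  by_contra! hK
  exact h ⟨hv.imp fun u hu => ⟨hu, hK u hu⟩, fun _ => hK⟩

theorem not_of_notMem_cpre (h : v ∉ cpre R P K) (hv : v ∈ P) (hu : R v u) : ¬ K v u :=
  fun hK => h ⟨⟨u, hu, hK⟩, fun hvP => absurd hv hvP⟩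

/-- The player owning `P` cannot force, from outside `X`, an edge that is in `T` or leads
to `X`. -/
def AttractorClosed (R : V → V → Prop) (P : Set V) (T : V → V → Prop) (X : Set V) : Prop :=
  cpre R P (fun v u => T v u ∨ u ∈ X) ⊆ X

/-- The stages of the attractor: from stage `o`, the player owning `P` can force an edge of `T` or
a move to an earlier stage. On infinite graphs the stages are transfinite. -/
def attractorStage (R : V → V → Prop) (P : Set V) (T : V → V → Prop) (o : Ordinal.{u}) : Set V :=
  cpre R P fun v u => T v u ∨ ∃ o', ∃ _ : o' < o, u ∈ attractorStage R P T o'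
termination_by o

/-- The attractor: the vertices from which the player owning `P` can force an edge of `T`. -/
def attractor (R : V → V → Prop) (P : Set V) (T : V → V → Prop) : Set V :=
  {v | ∃ o, v ∈ attractorStage R P T o}

/-- The first stage of the attractor that contains `v`. -/
noncomputable def attractorRank (R : V → V → Prop) (P : Set V) (T : V → V → Prop) (v : V) :
    Ordinal.{u} :=
  sInf {o | v ∈ attractorStage R P T o}

/-- The moves by which the player owning `P` forces an edge of `T`: the edges of `T` itself and
those that decrease the rank in the attractor. -/
def AttractorMove (R : V → V → Prop) (P : Set V) (T : V → V → Prop) (v u : V) : Prop :=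
  T v u ∨ u ∈ attractor R P T ∧ attractorRank R P T u < attractorRank R P T v

theorem mem_attractorStage_rank (hv : v ∈ attractor R P T) :
    v ∈ attractorStage R P T (attractorRank R P T v) :=
  csInf_mem (s := {o | v ∈ attractorStage R P T o}) hv

theorem mem_cpre_attractorMove (hv : v ∈ attractor R P T) :
    v ∈ cpre R P (AttractorMove R P T) := by
  have hstage := mem_attractorStage_rank hv
  rw [attractorStage] at hstage
  refine mem_cpre_mono (fun u => Or.imp_right ?_) hstage
  rintro ⟨o, ho, hu⟩
  exact ⟨⟨o, hu⟩, (csInf_le' (s := {o | u ∈ attractorStage R P T o}) hu).trans_lt ho⟩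

theorem attractorClosed_attractor (R : V → V → Prop) (P : Set V) (T : V → V → Prop) :
    AttractorClosed R P T (attractor R P T) := by
  intro v hv
  have hrank (u : V) : attractorRank R P T u < Order.succ (⨆ u, attractorRank R P T u) :=
    Order.lt_succ_of_le (le_ciSup (Ordinal.bddAbove_of_small) u)
  refine ⟨Order.succ (⨆ u, attractorRank R P T u), ?_⟩
  rw [attractorStage]
  exact mem_cpre_mono (fun u => Or.imp_right fun hu => ⟨_, hrank u, mem_attractorStage_rank hu⟩) hv

theorem frequently_of_attractorMove {π : ℕ → V}
    (hmove : ∀ i, π i ∈ attractor R P T → AttractorMove R P T (π i) (π (i + 1)))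
    (hmem : ∃ᶠ i in atTop, π i ∈ attractor R P T) :
    ∃ᶠ i in atTop, T (π i) (π (i + 1)) := by
  by_contra hT
  rw [not_frequently] at hT
  obtain ⟨N, hN, hT⟩ := (hmem.and_eventually (eventually_forall_ge_atTop.2 hT)).exists
  have hstep {i : ℕ} (hi : N ≤ i) (hA : π i ∈ attractor R P T) :=
    (hmove i hA).resolve_left (hT i hi)
  have hA (i : ℕ) : π (N + i) ∈ attractor R P T := by
    induction i with
    | zero => exact hN
    | succ i ih => exact (hstep (Nat.le_add_right N i) ih).1
  exact not_strictAnti_of_wellFoundedLT (fun i => attractorRank R P T (π (N + i)))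
    (strictAnti_nat_of_succ_lt fun i => (hstep (Nat.le_add_right N i) (hA i)).2)

end Attractor

/-! ### Gluing strategies -/

section Glue

variable {ι : Type*} [LinearOrder ι] {S : ι → V → V → Prop}

/-- The strategy that follows, at each vertex, the first of the strategies `S i` defined there. -/
def glue (S : ι → V → V → Prop) (v u : V) : Prop :=
  ∃ i, S i v u ∧ ∀ j < i, v ∉ live (S j)

theorem live_glue [WellFoundedLT ι] (S : ι → V → V → Prop) :
    live (glue S) = ⋃ i, live (S i) := by
  ext v
  rw [Set.mem_iUnion]
  refine ⟨fun ⟨u, i, hu, _⟩ => ⟨i, u, hu⟩, fun hv => ?_⟩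
  obtain ⟨i, ⟨u, hu⟩, hmin⟩ := exists_minimal_of_wellFoundedLT (fun i => v ∈ live (S i)) hv
  exact ⟨u, i, hu, fun j hj hv => hj.not_ge (hmin hv hj.le)⟩

theorem exists_isPath_of_isPath_glue [WellFoundedLT ι]
    (hlive : ∀ i v u, S i v u → ∃ j ≤ i, u ∈ live (S j)) {π : ℕ → V} (hπ : IsPath (glue S) π) :
    ∃ i N, IsPath (S i) (fun n => π (n + N)) ∧ ∀ j < i, ∀ n, π (n + N) ∉ live (S j) := by
  choose idx hS hfirst using hπ
  have hanti : Antitone idx := antitone_nat_of_succ_le fun n => by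
    obtain ⟨j, hj, hmem⟩ := hlive _ _ _ (hS n)
    exact (not_lt.1 fun hlt => hfirst (n + 1) j hlt hmem).trans hj
  obtain ⟨N, hN⟩ := WellFoundedLT.antitone_chain_condition hanti
  have hidx (n : ℕ) : idx (n + N) = idx N := (hN (n + N) (Nat.le_add_left N n)).symm
  refine ⟨idx N, N, fun n => ?_, fun j hj n => hfirst (n + N) j (by rwa [hidx])⟩
  have hstep := hS (n + N)
  rwa [hidx, Nat.add_right_comm] at hstep

end Glue

/-! ### Paradises -/

section Paradise

variable {w : V → V → β} {R S : V → V → Prop} {P : Set V} {J : Set β}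

/-- A paradise of the player who owns the vertices in `P` and wants the payoff to be in `J`: a set
of vertices, here `live S`, on which this player wins by a positional strategy without ever leaving
it. The strategy is encoded by the edges `S` that it leaves possible; any choice of one such edge
at each vertex of `P` is then an ordinary positional strategy. -/
structure IsParadise (w : V → V → β) (R : V → V → Prop) (P : Set V) (J : Set β)
    (S : V → V → Prop) : Prop where
  le : S ≤ R
  deadEndFree : DeadEndFree S
  trap : ∀ ⦃v u⦄, v ∈ live S → v ∉ P → R v u → S v u
  win : ∀ ⦃π⦄, IsPath S π → payoff w π ∈ J

theorem IsParadise.glue {ι : Type*} [LinearOrder ι] [WellFoundedLT ι] {S : ι → V → V → Prop}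
    (hle : ∀ i, S i ≤ R) (hlive : ∀ i v u, S i v u → ∃ j ≤ i, u ∈ live (S j))
    (htrap : ∀ i v u, v ∈ live (S i) → v ∉ P → R v u → S i v u)
    (hwin : ∀ i π, IsPath (S i) π → (∀ j < i, ∀ n, π n ∉ live (S j)) → payoff w π ∈ J) :
    IsParadise w R P J (glue S) where
  le := fun v u ⟨i, hu, _⟩ => hle i v u hu
  deadEndFree := fun v u ⟨i, hu, _⟩ => by
    obtain ⟨j, _, hj⟩ := hlive i v u hu
    exact live_glue S ▸ Set.mem_iUnion_of_mem j hj
  trap := fun v u ⟨_, i, ht, hfirst⟩ hvP hu => ⟨i, htrap i v u ⟨_, ht⟩ hvP hu, hfirst⟩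
  win := fun π hπ => by
    obtain ⟨i, N, hpath, hfirst⟩ := exists_isPath_of_isPath_glue hlive hπ
    exact payoff_nat_add w π N ▸ hwin i _ hpath hfirst

theorem IsParadise.exists_iUnion {ι : Type*} {S : ι → V → V → Prop}
    (hS : ∀ i, IsParadise w R P J (S i)) :
    ∃ S', IsParadise w R P J S' ∧ live S' = ⋃ i, live (S i) := by
  obtain ⟨_, _⟩ := exists_wellFoundedLT (α := ι)
  exact ⟨LiminfGame.glue S, IsParadise.glue (fun i => (hS i).le)
    (fun i _ _ hu => ⟨i, le_rfl, (hS i).deadEndFree hu⟩) (fun i _ _ => ((hS i).trap · · ·))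
    (fun i _ hπ _ => (hS i).win hπ), live_glue S⟩

theorem exists_greatest_isParadise (w : V → V → β) (R : V → V → Prop) (P : Set V) (J : Set β) :
    ∃ S, IsParadise w R P J S ∧ ∀ S', IsParadise w R P J S' → live S' ⊆ live S := by
  obtain ⟨S, hS, hlive⟩ :=
    IsParadise.exists_iUnion (S := fun S : {S // IsParadise w R P J S} => S.1) Subtype.property
  exact ⟨S, hS, fun S' hS' => hlive ▸ Set.subset_iUnion_of_subset ⟨S', hS'⟩ subset_rfl⟩

theorem IsParadise.exists_extension (hS : IsParadise w R P J S) {S' : V → V → Prop} (hle : S' ≤ R)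
    (hlive : ∀ v u, S' v u → u ∈ live S ∪ live S')
    (htrap : ∀ v u, v ∈ live S' → v ∉ P → R v u → S' v u)
    (hwin : ∀ π, IsPath S' π → (∀ n, π n ∉ live S) → payoff w π ∈ J) :
    ∃ S'', IsParadise w R P J S'' ∧ live S'' = live S ∪ live S' := by
  refine ⟨LiminfGame.glue fun i : Bool => cond i S' S, IsParadise.glue ?_ ?_ ?_ ?_, ?_⟩
  · exact Bool.rec hS.le hle
  · rintro (_ | _) v u hu
    · exact ⟨false, le_rfl, hS.deadEndFree hu⟩
    · exact (hlive v u hu).elim (⟨false, Bool.false_le _, ·⟩) (⟨true, le_rfl, ·⟩)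
  · exact Bool.rec (fun _ _ => (hS.trap · · ·)) htrap
  · rintro (_ | _) π hπ hfirst
    · exact hS.win hπ
    · exact hwin π hπ (hfirst false Bool.false_lt_true)
  · rw [live_glue, Set.union_comm, Set.union_eq_iUnion]
    exact Set.iUnion_congr (Bool.rec rfl rfl)

theorem IsParadise.exists_positional (hS : IsParadise w R P J S) (hR : ∀ v, v ∈ live R) :
    ∃ f : V → V, (∀ v, R v (f v)) ∧ ∀ π, IsPath R π → π 0 ∈ live S →
      (∀ i, π i ∈ P → π (i + 1) = f (π i)) → payoff w π ∈ J := by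
  have hmove (v : V) : ∃ u, R v u ∧ (v ∈ live S → S v u) := by
    by_cases hv : v ∈ live S
    · exact hv.imp fun u hu => ⟨hS.le v u hu, fun _ => hu⟩
    · exact (hR v).imp fun u hu => ⟨hu, (absurd · hv)⟩
  choose f hfR hfS using hmove
  refine ⟨f, hfR, fun π hπ h0 hf => ?_⟩
  have hstep (i : ℕ) (hi : π i ∈ live S) : S (π i) (π (i + 1)) := by
    by_cases hP : π i ∈ P
    · exact hf i hP ▸ hfS _ hi
    · exact hS.trap hi hP (hπ i)
  have hlive (i : ℕ) : π i ∈ live S := by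
    induction i with
    | zero => exact h0
    | succ i ih => exact hS.deadEndFree (hstep i ih)
  exact hS.win fun i => hstep i (hlive i)

end Paradise

/-! ### Subgames -/

section Subgame

variable {w : V → V → β} {R S S' T : V → V → Prop} {P X : Set V} {J : Set β} {v u : V}

/-- The subgame outside `X` without the edges of `T`. -/
def avoid (R : V → V → Prop) (X : Set V) (T : V → V → Prop) (v u : V) : Prop :=
  R v u ∧ v ∉ X ∧ u ∉ X ∧ ¬ T v u

theorem avoid_le : avoid R X T ≤ R :=
  fun _ _ h => h.1

theorem AttractorClosed.live_diff_subset (hX : AttractorClosed R P T X) :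
    live R \ X ⊆ live (avoid R X T) := by
  rintro v ⟨hv, hvX⟩
  obtain ⟨u, hu, hK⟩ := exists_not_of_notMem_cpre hv fun h => hvX (hX h)
  exact ⟨u, hu, hvX, fun h => hK (.inr h), fun h => hK (.inl h)⟩

theorem AttractorClosed.deadEndFree_avoid (hX : AttractorClosed R P T X) (hR : DeadEndFree R) :
    DeadEndFree (avoid R X T) :=
  fun _ _ hu => hX.live_diff_subset ⟨hR hu.1, hu.2.2.1⟩

theorem AttractorClosed.avoid_of_mem (hX : AttractorClosed R P T X) (hvX : v ∉ X) (hvP : v ∈ P)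
    (hu : R v u) : avoid R X T v u :=
  have hK := not_of_notMem_cpre (fun h => hvX (hX h)) hvP hu
  ⟨hu, hvX, fun h => hK (.inr h), fun h => hK (.inl h)⟩

theorem IsParadise.of_avoid (hS : IsParadise w (avoid R X T) Pᶜ J S)
    (hX : AttractorClosed R P T X) : IsParadise w R Pᶜ J S :=
  { hS with
    le := hS.le.trans avoid_le
    trap := fun _ _ ⟨t, ht⟩ hvP hu => hS.trap ⟨t, ht⟩ hvP <|
      hX.avoid_of_mem (hS.le _ t ht).2.1 (Set.notMem_compl_iff.1 hvP) hu }

theorem IsParadise.attractorClosed_of_greatest (hS : IsParadise w R P J S)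
    (hgreatest : ∀ S', IsParadise w R P J S' → live S' ⊆ live S) :
    AttractorClosed R P ⊥ (live S) := by
  intro v hv
  let S' : V → V → Prop := fun x u => x = v ∧ R x u ∧ u ∈ live S
  obtain ⟨S'', hS'', hlive⟩ := hS.exists_extension (S' := S') (fun x u h => h.2.1)
    (fun x u h => .inl h.2.2)
    (fun x u ⟨_, hx, _⟩ hxP hu => ⟨hx, hu, ((hx ▸ hv).2 hxP u hu).resolve_left id⟩)
    (fun π hπ havoid => absurd (hπ 0).2.2 (havoid 1))
  obtain ⟨u, hu, hK⟩ := hv.1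
  exact hgreatest S'' hS'' (hlive ▸ .inr ⟨u, rfl, hu, hK.resolve_left id⟩)

theorem IsParadise.live_eq_empty_of_avoid_greatest (hS : IsParadise w R P J S)
    (hgreatest : ∀ S', IsParadise w R P J S' → live S' ⊆ live S)
    (hS' : IsParadise w (avoid R (live S) ⊥) P J S') : live S' = ∅ := by
  -- The opponent may also move from `live S'` into `live S`, and this must be allowed.
  let Q : V → V → Prop := fun v u => S' v u ∨ v ∈ live S' ∧ R v u ∧ u ∈ live S
  have hsub : live S' ⊆ live Q := fun v hv => hv.imp fun u => .inl
  have hsup : live Q ⊆ live S' := fun v ⟨u, hu⟩ => hu.elim (⟨u, ·⟩) And.left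
  obtain ⟨S'', hS'', hlive⟩ := hS.exists_extension (S' := Q)
    (fun v u h => h.elim (fun h => (hS'.le v u h).1) (·.2.1))
    (fun v u h => h.elim (fun h => .inr (hsub (hS'.deadEndFree h))) (fun h => .inl h.2.2))
    (fun v u hv hvP hu => by
      by_cases hmem : u ∈ live S
      · exact .inr ⟨hsup hv, hu, hmem⟩
      · obtain ⟨t, ht⟩ := hsup hv
        exact .inl (hS'.trap ⟨t, ht⟩ hvP ⟨hu, (hS'.le v t ht).2.1, hmem, id⟩))
    (fun π hπ havoid => hS'.win fun i => (hπ i).resolve_right fun h => havoid (i + 1) h.2.2)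
  refine Set.eq_empty_of_forall_notMem fun v hv => ?_
  obtain ⟨u, hu⟩ := hv
  exact (hS'.le v u hu).2.1 (hgreatest S'' hS'' (hlive ▸ .inr (hsub ⟨u, hu⟩)))

end Subgame

/-! ### Positional determinacy -/

section Determinacy

variable {w : V → V → β} {R S T : V → V → Prop} {P : Set V} {J : Set β} {p : β} {v u : V}

/-- The strategy that forces an edge of `T` from the attractor and follows `S` elsewhere. -/
def forceOrFollow (R : V → V → Prop) (P : Set V) (T S : V → V → Prop) (v u : V) : Prop :=
  R v u ∧ (v ∈ attractor R P T → AttractorMove R P T v u) ∧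
    (v ∉ attractor R P T → v ∈ P → S v u)

theorem live_forceOrFollow (hS : S ≤ R) (hcover : live R \ attractor R P T ⊆ live S) :
    live (forceOrFollow R P T S) = live R := by
  refine Set.Subset.antisymm (fun v ⟨u, hu⟩ => ⟨u, hu.1⟩) fun v hv => ?_
  by_cases hvA : v ∈ attractor R P T
  · obtain ⟨u, hu, hmove⟩ := (mem_cpre_attractorMove hvA).1
    exact ⟨u, hu, fun _ => hmove, (absurd hvA ·)⟩
  · obtain ⟨u, hu⟩ := hcover ⟨hv, hvA⟩
    exact ⟨u, hS v u hu, (absurd · hvA), fun _ _ => hu⟩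

theorem forceOrFollow_of_notMem (hvP : v ∉ P) (hu : R v u) : forceOrFollow R P T S v u :=
  ⟨hu, fun hvA => (mem_cpre_attractorMove hvA).2 hvP u hu, fun _ h => absurd h hvP⟩

theorem frequently_or_exists_isPath_of_forceOrFollow
    (htrap : ∀ v u, v ∈ live S → v ∉ P → avoid R (attractor R P T) T v u → S v u)
    (hcover : live R \ attractor R P T ⊆ live S) {π : ℕ → V}
    (hπ : IsPath (forceOrFollow R P T S) π) :
    (∃ᶠ i in atTop, T (π i) (π (i + 1))) ∨ ∃ N, IsPath S fun i => π (i + N) := by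
  refine or_iff_not_imp_left.2 fun hT => ?_
  have hA : ¬ ∃ᶠ i in atTop, π i ∈ attractor R P T := fun hA =>
    hT (frequently_of_attractorMove (fun i => (hπ i).2.1) hA)
  rw [not_frequently] at hT hA
  obtain ⟨N, hN⟩ := eventually_atTop.1 (hT.and hA)
  refine ⟨N, fun i => ?_⟩
  change S (π (i + N)) (π (i + 1 + N))
  obtain ⟨hvT, hvA⟩ := hN (i + N) (Nat.le_add_left N i)
  have huA := (hN (i + 1 + N) (Nat.le_add_left N (i + 1))).2
  rw [Nat.add_right_comm] at huA ⊢
  obtain ⟨hu, -, hfollow⟩ := hπ (i + N)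
  by_cases hvP : π (i + N) ∈ P
  · exact hfollow hvA hvP
  · exact htrap _ _ (hcover ⟨⟨_, hu⟩, hvA⟩) hvP ⟨hu, hvA, huA, hvT⟩

/-- The edges of weight `p`. -/
def HasWeight (w : V → V → β) (p : β) (v u : V) : Prop :=
  w v u = p

theorem IsParadise.forceOrFollow (hpJ : p ∈ J) (hR : DeadEndFree R)
    (hmin : ∀ v u, R v u → p ≤ w v u)
    (hS : IsParadise w (avoid R (attractor R P (HasWeight w p)) (HasWeight w p)) P J S)
    (hcover : live R \ attractor R P (HasWeight w p) ⊆ live S) :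
    IsParadise w R P J (forceOrFollow R P (HasWeight w p) S) where
  le _ _ h := h.1
  deadEndFree v u h := live_forceOrFollow (hS.le.trans avoid_le) hcover ▸ hR h.1
  trap _ _ _ := forceOrFollow_of_notMem
  win π hπ := by
    rcases frequently_or_exists_isPath_of_forceOrFollow hS.trap hcover hπ with hp | ⟨N, hN⟩
    · exact payoff_eq_of_frequently_eq (fun i => hmin _ _ (hπ i).1) hp ▸ hpJ
    · exact payoff_nat_add w π N ▸ hS.win hN

/-- Positional determinacy: every vertex of the game lies in a paradise of one of the players. -/
def Determined (w : V → V → β) (R : V → V → Prop) (P : Set V) (J : Set β) : Prop :=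
  ∃ S S', IsParadise w R P J S ∧ IsParadise w R Pᶜ Jᶜ S' ∧ live R ⊆ live S ∪ live S'

theorem Determined.of_compl (h : Determined w R Pᶜ Jᶜ) : Determined w R P J := by
  obtain ⟨S, S', hS, hS', hlive⟩ := h
  rw [compl_compl, compl_compl] at hS'
  exact ⟨S', S, hS', hS, Set.union_comm (live S) (live S') ▸ hlive⟩

theorem exists_isParadise_live_eq (hpJ : p ∈ J) (hR : DeadEndFree R)
    (hmin : ∀ v u, R v u → p ≤ w v u) (hempty : ∀ S, IsParadise w R Pᶜ Jᶜ S → live S = ∅)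
    (hdet : ∀ R' ≤ R, DeadEndFree R' → (∀ v u, R' v u → w v u ≠ p) → Determined w R' P J) :
    ∃ S, IsParadise w R P J S ∧ live S = live R := by
  have hA := attractorClosed_attractor R P (HasWeight w p)
  obtain ⟨S, S', hS, hS', hcover⟩ :=
    hdet _ avoid_le (hA.deadEndFree_avoid hR) fun _ _ h => h.2.2.2
  rw [hempty S' (hS'.of_avoid hA), Set.union_empty] at hcover
  replace hcover := hA.live_diff_subset.trans hcover
  exact ⟨_, hS.forceOrFollow hpJ hR hmin hcover,
    live_forceOrFollow (hS.le.trans avoid_le) hcover⟩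

theorem determined_of_least_mem (hpJ : p ∈ J) (hR : DeadEndFree R)
    (hmin : ∀ v u, R v u → p ≤ w v u)
    (hdet : ∀ R' ≤ R, DeadEndFree R' → (∀ v u, R' v u → w v u ≠ p) → Determined w R' P J) :
    Determined w R P J := by
  obtain ⟨C, hC, hgreatest⟩ := exists_greatest_isParadise w R Pᶜ Jᶜ
  have hclosed := hC.attractorClosed_of_greatest hgreatest
  obtain ⟨S, hS, hlive⟩ := exists_isParadise_live_eq hpJ (hclosed.deadEndFree_avoid hR)
    (fun v u h => hmin v u h.1) (fun S => hC.live_eq_empty_of_avoid_greatest hgreatest)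
    (fun R' hR' => hdet R' (hR'.trans avoid_le))
  rw [← compl_compl P] at hS
  refine ⟨S, C, compl_compl P ▸ hS.of_avoid hclosed, hC, ?_⟩
  rw [hlive, Set.union_comm]
  exact Set.sdiff_subset_iff.1 hclosed.live_diff_subset

theorem determined_of_forall_mem_finset (w : V → V → β) (P : Set V) (J : Set β)
    (hR : DeadEndFree R) {F : Finset β} (hF : ∀ v u, R v u → w v u ∈ F) : Determined w R P J := by
  induction F using Finset.induction_on_min generalizing R P J with
  | empty =>
    have hparadise (P : Set V) (J : Set β) : IsParadise w R P J R :=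
      ⟨le_rfl, hR, fun _ _ _ _ => id, fun π hπ => absurd (hF _ _ (hπ 0)) (Finset.notMem_empty _)⟩
    exact ⟨R, R, hparadise P J, hparadise Pᶜ Jᶜ, Set.subset_union_left⟩
  | insert p F hlt ih =>
    have hmin (v u : V) (hu : R v u) : p ≤ w v u :=
      (Finset.mem_insert.1 (hF v u hu)).elim ge_of_eq fun h => (hlt _ h).le
    have hdet (P : Set V) (J : Set β) (R' : V → V → Prop) (hle : R' ≤ R) (hR' : DeadEndFree R')
        (hne : ∀ v u, R' v u → w v u ≠ p) : Determined w R' P J :=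
      ih P J hR' fun v u hu => Finset.mem_of_mem_insert_of_ne (hF v u (hle v u hu)) (hne v u hu)
    by_cases hpJ : p ∈ J
    · exact determined_of_least_mem hpJ hR hmin (hdet P J)
    · exact .of_compl (determined_of_least_mem hpJ hR hmin (hdet Pᶜ Jᶜ))

end Determinacy

end LiminfGame

namespace GameGraph

/-! ### Strategies with history -/

section History

variable {V : Type} {G : GameGraph V} {Win : (ℕ → V) → Prop}

theorem prefixList_succ (π : ℕ → V) (i : ℕ) :
    prefixList π (i + 1) = prefixList π i ++ [π (i + 1)] := by
  rw [prefixList, List.ofFn_succ_last]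
  rfl

theorem exists_prefixList_eq_append (π : ℕ → V) (i : ℕ) : ∃ l, prefixList π i = l ++ [π i] := by
  cases i with
  | zero => exact ⟨[], by simp [prefixList]⟩
  | succ i => exact ⟨_, prefixList_succ π i⟩

theorem exists_forall_succ_eq (x : V) (F : List V → V) :
    ∃ π : ℕ → V, π 0 = x ∧ ∀ i, π (i + 1) = F (prefixList π i) := by
  let history (n : ℕ) : List V := (fun l => l ++ [F l])^[n] [x]
  have history_succ (n : ℕ) : history (n + 1) = history n ++ [F (history n)] :=
    Function.iterate_succ_apply' _ n [x]
  let π (n : ℕ) : V := (history n).getLastD x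
  have hπ (n : ℕ) : π (n + 1) = F (history n) := by
    simp only [π, history_succ, List.getLastD_concat]
  have hprefix (n : ℕ) : prefixList π n = history n := by
    induction n with
    | zero => simp [prefixList, π, history]
    | succ n ih => rw [prefixList_succ, ih, history_succ, hπ]
  exact ⟨π, rfl, fun n => by rw [hprefix, hπ]⟩

theorem EveWins.not_adamWins (hE : G.EveWins Win) : ¬ G.AdamWins Win := by
  classical
  rintro ⟨τ, hτ, hτ_win⟩
  obtain ⟨σ, hσ, hσ_win⟩ := hE
  obtain ⟨π, h0, hπ⟩ := exists_forall_succ_eq G.init fun l =>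
    if l.getLastD G.init ∈ G.Eve then σ l else τ l
  have hlast (i : ℕ) : (prefixList π i).getLastD G.init = π i := by
    obtain ⟨l, hl⟩ := exists_prefixList_eq_append π i
    rw [hl, List.getLastD_concat]
  have hEve : G.ConsEve σ π := fun i hi => by rw [hπ, hlast, if_pos hi]
  have hAdam : G.ConsAdam τ π := fun i hi => by rw [hπ, hlast, if_neg hi]
  have hplay : G.IsPlay π := by
    refine ⟨h0, fun i => ?_⟩
    obtain ⟨l, hl⟩ := exists_prefixList_eq_append π i
    by_cases hi : π i ∈ G.Eve
    · exact hEve i hi ▸ hl ▸ hσ l _ hi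
    · exact hAdam i hi ▸ hl ▸ hτ l _ hi
  exact hτ_win π hplay hAdam (hσ_win π hplay hEve)

theorem EveWinsPos.eveWins (h : G.EveWinsPos Win) : G.EveWins Win := by
  obtain ⟨f, hf, hwin⟩ := h
  refine ⟨fun l => f (l.getLastD G.init), fun l v hv => by simpa using hf v hv,
    fun π hπ hcons => hwin π hπ fun i hi => ?_⟩
  obtain ⟨l, hl⟩ := exists_prefixList_eq_append π i
  simpa [hl] using hcons i hi

theorem AdamWinsPos.adamWins (h : G.AdamWinsPos Win) : G.AdamWins Win := by
  obtain ⟨f, hf, hwin⟩ := h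
  refine ⟨fun l => f (l.getLastD G.init), fun l v hv => by simpa using hf v hv,
    fun π hπ hcons => hwin π hπ fun i hi => ?_⟩
  obtain ⟨l, hl⟩ := exists_prefixList_eq_append π i
  simpa [hl] using hcons i hi

end History

theorem eveWinsPos_or_adamWinsPos {V : Type} (G : GameGraph V)
    (hw : {x | ∃ v u, G.E v u ∧ G.w v u = x}.Finite) (J : Set EReal) :
    G.EveWinsPos (fun π => G.liminfPayoff π ∈ J) ∨
      G.AdamWinsPos (fun π => G.liminfPayoff π ∈ J) := by
  classical
  let toEReal (n : ℤ) : EReal := (n : ℝ)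
  have hweights (v u : V) (hu : G.E v u) : toEReal (G.w v u) ∈ hw.toFinset.image toEReal :=
    Finset.mem_image_of_mem toEReal (hw.mem_toFinset.2 ⟨v, u, hu, rfl⟩)
  obtain ⟨S, S', hS, hS', hcover⟩ :=
    LiminfGame.determined_of_forall_mem_finset _ G.Eve J (fun _ u _ => G.succ u) hweights
  rcases hcover (G.succ G.init) with hinit | hinit
  · obtain ⟨f, hf, hwin⟩ := hS.exists_positional G.succ
    exact .inl ⟨f, fun v _ => hf v, fun π ⟨h0, hπ⟩ hcons => hwin π hπ (h0 ▸ hinit) hcons⟩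
  · obtain ⟨f, hf, hwin⟩ := hS'.exists_positional G.succ
    exact .inr ⟨f, fun v _ => hf v, fun π ⟨h0, hπ⟩ hcons => hwin π hπ (h0 ▸ hinit) hcons⟩

end GameGraph

theorem stmt2_general {V : Type} (G : GameGraph V)
    (hw : {x | ∃ v u, G.E v u ∧ G.w v u = x}.Finite) (J : Set EReal) :
    (G.EveWins (fun π => G.liminfPayoff π ∈ J) →
      G.EveWinsPos (fun π => G.liminfPayoff π ∈ J)) ∧
    (G.AdamWins (fun π => G.liminfPayoff π ∈ J) →
      G.AdamWinsPos (fun π => G.liminfPayoff π ∈ J)) := by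
  rcases G.eveWinsPos_or_adamWinsPos hw J with h | h
  · exact ⟨fun _ => h, fun hA => absurd hA h.eveWins.not_adamWins⟩
  · exact ⟨fun hE => absurd h.adamWins hE.not_adamWins, fun _ => h⟩

/-- In every interval liminf game `(G, I)`, where `I` is a finite
union of integer intervals, positional strategies suffice: if Eve has a winning
strategy then she has a positional one, and likewise for Adam. -/
theorem stmt2 {V : Type} [Fintype V] (G : GameGraph V) (r : ℕ)
    (Is : Fin r → Set ℤ) (hconn : ∀ i, (Is i).OrdConnected)
    (I : Set ℤ) (hI : I = ⋃ i, Is i) :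
    (G.EveWins (fun π => ∃ m : ℤ, m ∈ I ∧ G.liminfPayoff π = ((m : ℝ) : EReal)) →
      G.EveWinsPos (fun π => ∃ m : ℤ, m ∈ I ∧ G.liminfPayoff π = ((m : ℝ) : EReal))) ∧
    (G.AdamWins (fun π => ∃ m : ℤ, m ∈ I ∧ G.liminfPayoff π = ((m : ℝ) : EReal)) →
      G.AdamWinsPos (fun π => ∃ m : ℤ, m ∈ I ∧ G.liminfPayoff π = ((m : ℝ) : EReal))) := by
  exact stmt2_general G
    ((Set.finite_range fun e : V × V => G.w e.1 e.2).subset fun _ ⟨v, u, _, hx⟩ => ⟨(v, u), hx⟩)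
    {x | ∃ m : ℤ, m ∈ I ∧ x = ((m : ℝ) : EReal)}
end

section
/- Let I = I_1 ∪ ⋯ ∪ I_r be a finite union of nonempty bounded closed integer intervals with sup I_i < inf I_{i+1} for all i, and define Ω_I : ℤ → [1, 2r+1] by Ω_I(n) = 2i if n ∈ I_i, Ω_I(n) = 1 if n < inf I_1, and Ω_I(n) = max{1 + 2i : sup I_i < n} otherwise. Then for every sequence (c_k)_{k∈ℕ} of integers, the minimal value of Ω_I(c_k) that is attained for infinitely many k is even if and only if liminf_{k→∞} c_k is finite and belongs to I. -/
/-!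
`Ω_I(n)` is one plus the number of endpoints of intervals passed on the way up to `n`, where
`inf I_i` is passed when `inf I_i ≤ n` and `sup I_i` when `sup I_i < n`. Hence `Ω_I` is monotone;
it is even exactly on `I`, so every even value has a finite fibre.

A monotone `f` sends the eventual minimum of `c`, when there is one, to the eventual minimum of
`f ∘ c`. Conversely, an eventual minimum of `f ∘ c` with finite fibre comes from an eventual
minimum of `c`: the least element of the fibre that `c` hits infinitely often. It remains to note
that the eventual minimum is the liminf for integers, and the least value attained infinitely
often for naturals.
-/

open Filter

open scoped Classical in
/-- The priority function `Ω_I` associated with the union of the integer intervals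
`[lo i, hi i]` (the `i`-th interval being `I_{i+1}` in 1-based numbering):
`Ω_I(n) = 2(i+1)` if `n ∈ I_{i+1}`, `Ω_I(n) = 1` if `n` is below all intervals, and
otherwise the maximum of `2(i+1)+1` over intervals `I_{i+1}` lying strictly below `n`. -/
noncomputable def OmegaI (r : ℕ) (lo hi : Fin r → ℤ) (n : ℤ) : ℕ :=
  if h : ∃ i : Fin r, lo i ≤ n ∧ n ≤ hi i then 2 * (h.choose.1 + 1)
  else if hS : (Finset.univ.filter (fun i : Fin r => hi i < n)).Nonempty then
    2 * ((Finset.univ.filter (fun i : Fin r => hi i < n)).max' hS).1 + 3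
  else 1

section EventualMin

variable {ι α β : Type*} {l : Filter ι}

/-- The values attained frequently by `u` along `l`; for a sequence and `l = atTop`, these are the
values attained infinitely often. -/
def frequentValues (l : Filter ι) (u : ι → α) : Set α :=
  {a | ∃ᶠ k in l, u k = a}

/-- `a` is the eventual minimum of `u` along `l`: a frequently attained value which is eventually a
lower bound. This is a liminf that is attained, and makes sense without completeness of `α`. -/
structure IsEventualMin [LE α] (l : Filter ι) (u : ι → α) (a : α) : Prop where
  mem_frequentValues : a ∈ frequentValues l u
  eventually_le : ∀ᶠ k in l, a ≤ u k

theorem exists_mem_frequentValues_of_finite {u : ι → α} {s : Set α} (hs : s.Finite)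
    (h : ∃ᶠ k in l, u k ∈ s) : ∃ a ∈ s, a ∈ frequentValues l u :=
  (frequently_exists_finite hs).1 (h.mono fun k hk => ⟨u k, hk, rfl⟩)

theorem eventually_le_of_mem_lowerBounds_frequentValues [LinearOrder α] {u : ι → α} {a : α}
    {s : Set α} (hs : s.Finite) (hlt : ∀ᶠ k in l, u k < a → u k ∈ s)
    (ha : a ∈ lowerBounds (s ∩ frequentValues l u)) : ∀ᶠ k in l, a ≤ u k := by
  by_contra hnot
  have hfreq : ∃ᶠ k in l, u k ∈ s ∩ Set.Iio a :=
    ((not_eventually.1 hnot).and_eventually hlt).mono fun k ⟨hk, hks⟩ =>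
      ⟨hks (not_le.1 hk), not_le.1 hk⟩
  obtain ⟨b, ⟨hbs, hba⟩, hb⟩ :=
    exists_mem_frequentValues_of_finite (hs.inter_of_left (Set.Iio a)) hfreq
  exact (ha ⟨hbs, hb⟩).not_gt hba

theorem IsEventualMin.isLeast_frequentValues [Preorder α] {u : ι → α} {a : α}
    (h : IsEventualMin l u a) : IsLeast (frequentValues l u) a := by
  refine ⟨h.mem_frequentValues, fun b hb => ?_⟩
  obtain ⟨k, rfl, hk⟩ := (hb.and_eventually h.eventually_le).exists
  exact hk

theorem isLeast_frequentValues_iff [LinearOrder α] [LocallyFiniteOrderBot α] {u : ι → α} {a : α} :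
    IsLeast (frequentValues l u) a ↔ IsEventualMin l u a := by
  refine ⟨fun h => ⟨h.1, ?_⟩, IsEventualMin.isLeast_frequentValues⟩
  exact eventually_le_of_mem_lowerBounds_frequentValues (Set.finite_Iio a)
    (Eventually.of_forall fun _ => id) (lowerBounds_mono_set Set.inter_subset_right h.2)

theorem IsEventualMin.comp_monotone [Preorder α] [Preorder β] {u : ι → α} {a : α} {f : α → β}
    (h : IsEventualMin l u a) (hf : Monotone f) : IsEventualMin l (f ∘ u) (f a) :=
  ⟨h.mem_frequentValues.mono fun _ hk => congrArg f hk, h.eventually_le.mono fun _ hk => hf hk⟩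

theorem IsEventualMin.exists_of_comp_monotone [LinearOrder α] [PartialOrder β] {u : ι → α}
    {f : α → β} {b : β} (h : IsEventualMin l (f ∘ u) b) (hf : Monotone f)
    (hb : (f ⁻¹' {b}).Finite) : ∃ a, f a = b ∧ IsEventualMin l u a := by
  obtain ⟨a, ⟨hfa, ha⟩, hmin⟩ :=
    Set.exists_min_image (f ⁻¹' {b} ∩ frequentValues l u) id (hb.inter_of_left _)
      (exists_mem_frequentValues_of_finite hb h.mem_frequentValues)
  have hlt : ∀ᶠ k in l, u k < a → u k ∈ f ⁻¹' {b} :=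
    h.eventually_le.mono fun k hk hka => ((hf hka.le).trans_eq hfa).antisymm hk
  exact ⟨a, hfa, ha, eventually_le_of_mem_lowerBounds_frequentValues hb hlt hmin⟩

theorem isEventualMin_comp_iff [LinearOrder α] [PartialOrder β] {u : ι → α} {f : α → β} {b : β}
    (hf : Monotone f) (hb : (f ⁻¹' {b}).Finite) :
    IsEventualMin l (f ∘ u) b ↔ ∃ a, f a = b ∧ IsEventualMin l u a := by
  refine ⟨fun h => h.exists_of_comp_monotone hf hb, ?_⟩
  rintro ⟨a, rfl, ha⟩
  exact ha.comp_monotone hf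

theorem IsEventualMin.liminf_eq [CompleteLattice α] {u : ι → α} {a : α}
    (h : IsEventualMin l u a) : liminf u l = a :=
  le_antisymm (liminf_le_of_frequently_le' (h.mem_frequentValues.mono fun _ hk => hk.le))
    (le_liminf_of_le (h := h.eventually_le))

theorem liminf_intCast_eq_intCast_iff {c : ι → ℤ} {m : ℤ} :
    liminf (fun k => ((c k : ℝ) : EReal)) l = ((m : ℝ) : EReal) ↔ IsEventualMin l c m := by
  have hcast : StrictMono fun n : ℤ => ((n : ℝ) : EReal) :=
    EReal.coe_strictMono.comp Int.cast_strictMono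
  refine ⟨fun h => ?_, fun h => (h.comp_monotone hcast.monotone).liminf_eq⟩
  have hge : ∀ᶠ k in l, m ≤ c k := by
    have hlt := (hcast (sub_one_lt m)).trans_eq h.symm
    exact (eventually_lt_of_lt_liminf hlt).mono fun k hk =>
      Int.sub_one_lt_iff.1 (hcast.lt_iff_lt.1 hk)
  have hle : ∃ᶠ k in l, c k ≤ m := by
    have hlt := h.trans_lt (hcast (lt_add_one m))
    exact (frequently_lt_of_liminf_lt (h := hlt)).mono fun k hk =>
      Int.lt_add_one_iff.1 (hcast.lt_iff_lt.1 hk)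
  exact ⟨(hle.and_eventually hge).mono fun k hk => hk.1.antisymm hk.2, hge⟩

end EventualMin

theorem eq_Iic_max'_of_isLowerSet {α : Type*} [LinearOrder α] [LocallyFiniteOrderBot α]
    {s : Finset α} (hs : IsLowerSet (s : Set α)) (hne : s.Nonempty) :
    s = Finset.Iic (s.max' hne) := by
  ext a
  rw [Finset.mem_Iic]
  exact ⟨s.le_max' a, fun ha => hs ha (s.max'_mem hne)⟩

section OmegaI

variable {r : ℕ} {lo hi : Fin r → ℤ}

theorem even_OmegaI_iff {n : ℤ} :
    Even (OmegaI r lo hi n) ↔ n ∈ ⋃ i, Set.Icc (lo i) (hi i) := by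
  simp only [Set.mem_iUnion, Set.mem_Icc]
  unfold OmegaI
  split_ifs with hI hbelow
  · simp [hI]
  · simp [hI, parity_simps]
  · simp [hI]

theorem finite_OmegaI_fiber {p : ℕ} (hp : Even p) : (OmegaI r lo hi ⁻¹' {p}).Finite := by
  refine (Set.finite_iUnion fun i => Set.finite_Icc (lo i) (hi i)).subset ?_
  rintro n rfl
  exact even_OmegaI_iff.1 hp

theorem strictMono_lo (hne : ∀ i, lo i ≤ hi i) (hord : ∀ i j : Fin r, i < j → hi i < lo j) :
    StrictMono lo :=
  fun i j hij => (hne i).trans_lt (hord i j hij)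

theorem strictMono_hi (hne : ∀ i, lo i ≤ hi i) (hord : ∀ i j : Fin r, i < j → hi i < lo j) :
    StrictMono hi :=
  fun i j hij => (hord i j hij).trans_le (hne j)

theorem filter_lo_le_eq_Iic (hne : ∀ i, lo i ≤ hi i) (hord : ∀ i j : Fin r, i < j → hi i < lo j)
    {n : ℤ} {i : Fin r} (hn : n ∈ Set.Icc (lo i) (hi i)) :
    ({j | lo j ≤ n} : Finset (Fin r)) = Finset.Iic i := by
  ext j
  rw [Finset.mem_filter_univ, Finset.mem_Iic]
  refine ⟨fun hj => ?_, fun hj => ((strictMono_lo hne hord).monotone hj).trans hn.1⟩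
  exact le_of_not_gt fun hij => (hn.2.trans_lt (hord i j hij)).not_ge hj

theorem filter_hi_lt_eq_Iio (hne : ∀ i, lo i ≤ hi i) (hord : ∀ i j : Fin r, i < j → hi i < lo j)
    {n : ℤ} {i : Fin r} (hn : n ∈ Set.Icc (lo i) (hi i)) :
    ({j | hi j < n} : Finset (Fin r)) = Finset.Iio i := by
  ext j
  rw [Finset.mem_filter_univ, Finset.mem_Iio]
  refine ⟨fun hj => ?_, fun hj => (hord j i hj).trans_le hn.1⟩
  exact (strictMono_hi hne hord).lt_iff_lt.1 (hj.trans_le hn.2)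

theorem filter_lo_le_eq_filter_hi_lt (hne : ∀ i, lo i ≤ hi i) {n : ℤ}
    (hn : ¬ ∃ i, lo i ≤ n ∧ n ≤ hi i) :
    ({j | lo j ≤ n} : Finset (Fin r)) = ({j | hi j < n} : Finset (Fin r)) :=
  Finset.filter_congr fun j _ =>
    ⟨fun hj => lt_of_not_ge fun hnj => hn ⟨j, hj, hnj⟩, (hne j).trans ∘ le_of_lt⟩

theorem OmegaI_eq_card (hne : ∀ i, lo i ≤ hi i) (hord : ∀ i j : Fin r, i < j → hi i < lo j)
    (n : ℤ) :
    OmegaI r lo hi n =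
      1 + ({i | lo i ≤ n} : Finset (Fin r)).card + ({i | hi i < n} : Finset (Fin r)).card := by
  unfold OmegaI
  split_ifs with hI hbelow
  · rw [filter_lo_le_eq_Iic hne hord hI.choose_spec, filter_hi_lt_eq_Iio hne hord hI.choose_spec,
      Fin.card_Iic, Fin.card_Iio]
    ring
  · have hlower : IsLowerSet (({i | hi i < n} : Finset (Fin r)) : Set (Fin r)) := by
      rw [Finset.coe_filter_univ]
      exact (isLowerSet_Iio n).preimage (strictMono_hi hne hord).monotone
    have hcard := congrArg Finset.card (eq_Iic_max'_of_isLowerSet hlower hbelow)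
    rw [Fin.card_Iic] at hcard
    rw [filter_lo_le_eq_filter_hi_lt hne hI, hcard]
    ring
  · rw [filter_lo_le_eq_filter_hi_lt hne hI, Finset.not_nonempty_iff_eq_empty.1 hbelow,
      Finset.card_empty]

theorem monotone_OmegaI (hne : ∀ i, lo i ≤ hi i) (hord : ∀ i j : Fin r, i < j → hi i < lo j) :
    Monotone (OmegaI r lo hi) := by
  intro m n hmn
  rw [OmegaI_eq_card hne hord, OmegaI_eq_card hne hord]
  gcongr

end OmegaI

theorem stmt3_general {ι : Type*} (l : Filter ι) (r : ℕ) (lo hi : Fin r → ℤ)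
    (hne : ∀ i, lo i ≤ hi i) (hord : ∀ i j : Fin r, i < j → hi i < lo j) (c : ι → ℤ) :
    (∃ p, Even p ∧ IsLeast (frequentValues l (OmegaI r lo hi ∘ c)) p) ↔
      ∃ m ∈ ⋃ i, Set.Icc (lo i) (hi i),
        liminf (fun k => ((c k : ℝ) : EReal)) l = ((m : ℝ) : EReal) :=
  calc (∃ p, Even p ∧ IsLeast (frequentValues l (OmegaI r lo hi ∘ c)) p)
      ↔ ∃ p, Even p ∧ ∃ m, OmegaI r lo hi m = p ∧ IsEventualMin l c m :=
        exists_congr fun _ => and_congr_right fun hp =>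
          isLeast_frequentValues_iff.trans
            (isEventualMin_comp_iff (monotone_OmegaI hne hord) (finite_OmegaI_fiber hp))
    _ ↔ ∃ m, Even (OmegaI r lo hi m) ∧ IsEventualMin l c m := by grind
    _ ↔ _ := exists_congr fun _ => and_congr even_OmegaI_iff liminf_intCast_eq_intCast_iff.symm

/-- For `I = I_1 ∪ ⋯ ∪ I_r` a finite union of nonempty bounded
closed integer intervals with `sup I_i < inf I_{i+1}`, and for every integer sequence
`c`, the minimal value of `Ω_I (c k)` attained for infinitely many `k` is even iff the
liminf of `c` (in the extended reals) is finite and belongs to `I`. -/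
theorem stmt3 (r : ℕ) (hr : 0 < r) (lo hi : Fin r → ℤ)
    (hne : ∀ i, lo i ≤ hi i) (hord : ∀ i j : Fin r, i < j → hi i < lo j)
    (I : Set ℤ) (hI : I = ⋃ i : Fin r, Set.Icc (lo i) (hi i))
    (c : ℕ → ℤ) :
    (∃ p, Even p ∧ (∀ N, ∃ k, N ≤ k ∧ OmegaI r lo hi (c k) = p) ∧
        ∀ q, (∀ N, ∃ k, N ≤ k ∧ OmegaI r lo hi (c k) = q) → p ≤ q) ↔
      (∃ m : ℤ, m ∈ I ∧
        liminf (fun k => ((c k : ℝ) : EReal)) atTop = ((m : ℝ) : EReal)) := by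
  simpa [hI, IsLeast, lowerBounds, frequentValues, frequently_atTop] using
    stmt3_general atTop r lo hi hne hord c
end

section
/- Let (V, V_∃, E, q_0, Ω) be a min-parity game with priorities contained in [0, |V|], and let n be the smallest even integer with n ≥ |V|. Construct the interval mean-payoff game (V', V'_∃, E', w, q_0, I) as follows: I = [0,1) ∪ [2,3) ∪ ⋯ ∪ [n, n+1); V' = V ∪ (V × {0, +, −}), writing (v,∗) as v^∗; V'_∃ = V_∃ ∪ {v^0, v^+, v^− : Ω(v) is even}; for each edge (v, u) ∈ E there is an edge (v, u^0) ∈ E' with weight Ω(v); for each v ∈ V with p = Ω(v) there are edges (v^0, v^+), (v^0, v^−), (v^+, v), (v^−, v) in E' all of weight p, a self-loop (v^+, v^+) of weight p + 1, and a self-loop (v^−, v^−) of weight p − 1. Then Eve has a winning strategy in the parity game if and only if Eve has a winning strategy in the interval mean-payoff game (i.e., a strategy ensuring MP(π) ∈ I for every consistent play π). -/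
/-!
Fix a priority `p` and measure a play of the gadget game by its excess over `p`, the total weight so
far minus `p` times the number of steps. Whoever owns the gadgets of priority `p` can balance in
them: entering with a positive excess they loop at `v⁻`, otherwise at `v⁺`, and they leave for `v`
once the excess is exactly `0`. If `p` is the least priority seen infinitely often and its gadgets
are balanced, the excess vanishes infinitely often and is eventually nonnegative, so the mean-payoff
is exactly `p`. A play that stays in one gadget of priority `p` forever has mean-payoff `p ± 1`, of
the wrong parity for the owner of the gadget, but a balancing owner never stays forever.

Eve transfers a winning strategy of the parity game by balancing in the even gadgets. Conversely,
she transfers a winning strategy of the gadget game by simulating it against an Adam who balances in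
the odd gadgets. The least recurring priority of the simulated play cannot be odd, as the
mean-payoff would then equal it. No determinacy theorem is needed.
-/

open Filter

/-- The interval mean-payoff game obtained from a parity game `(G, Ω)` by replacing
every vertex `v` by the gadget of Figure 3: the tag `0 : Fin 3` stands for `v⁰`, the
tag `1` for `v⁺` and the tag `2` for `v⁻`. Every edge `(v, u)` of `G` becomes an edge
`(v, u⁰)` of weight `Ω v`; the gadget edges `(v⁰, v⁺), (v⁰, v⁻), (v⁺, v), (v⁻, v)`
have weight `Ω v`, the self-loop on `v⁺` has weight `Ω v + 1` and the self-loop on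
`v⁻` has weight `Ω v − 1`. The gadget vertices `v⁰, v⁺, v⁻` belong to Eve iff `Ω v`
is even. -/
def mpOfParity {V : Type} (G : GameGraph V) (Ω : V → ℕ) :
    GameGraph (V ⊕ V × Fin 3) where
  Eve := Sum.inl '' G.Eve ∪ Sum.inr '' {p : V × Fin 3 | Even (Ω p.1)}
  E x y :=
    match x, y with
    | Sum.inl v, Sum.inr (u, t) => G.E v u ∧ t = 0
    | Sum.inr (v, t), Sum.inr (u, s) =>
        v = u ∧ ((t = 0 ∧ (s = 1 ∨ s = 2)) ∨ (t = 1 ∧ s = 1) ∨ (t = 2 ∧ s = 2))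
    | Sum.inr (v, t), Sum.inl u => v = u ∧ (t = 1 ∨ t = 2)
    | Sum.inl _, Sum.inl _ => False
  w x y :=
    match x, y with
    | Sum.inl v, _ => (Ω v : ℤ)
    | Sum.inr (v, t), Sum.inr (_, s) =>
        if t = s then (if t = 1 then (Ω v : ℤ) + 1 else (Ω v : ℤ) - 1) else (Ω v : ℤ)
    | Sum.inr (v, _), Sum.inl _ => (Ω v : ℤ)
  init := Sum.inl G.init
  succ := by
    rintro (v | ⟨v, t⟩)
    · obtain ⟨u, hu⟩ := G.succ v
      exact ⟨Sum.inr (u, 0), hu, rfl⟩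
    · fin_cases t
      · exact ⟨Sum.inr (v, 1), rfl, Or.inl ⟨rfl, Or.inl rfl⟩⟩
      · exact ⟨Sum.inr (v, 1), rfl, Or.inr (Or.inl ⟨rfl, rfl⟩)⟩
      · exact ⟨Sum.inr (v, 2), rfl, Or.inr (Or.inr ⟨rfl, rfl⟩)⟩

namespace GameGraph

variable {V : Type}

section History

variable {α : Type} {π π' : ℕ → α} {i : ℕ}

lemma prefixList_eq_map_range (π : ℕ → α) (i : ℕ) :
    prefixList π i = (List.range (i + 1)).map π :=
  List.ext_getElem (by simp [prefixList]) (by simp [prefixList, -List.ofFn_succ])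

lemma prefixList_eq_concat (π : ℕ → α) (i : ℕ) :
    prefixList π i = (List.range i).map π ++ [π i] := by
  simp [prefixList_eq_map_range, List.range_succ]

lemma prefixList_congr (h : Set.EqOn π π' (Set.Iic i)) : prefixList π i = prefixList π' i := by
  simp only [prefixList_eq_map_range]
  exact List.map_congr_left fun j hj => h (Nat.lt_succ_iff.1 (List.mem_range.1 hj))

lemma prefixList_getD {j : ℕ} (h : j ≤ i) (a : α) : (prefixList π i).getD j a = π j := by
  simp [prefixList_eq_map_range, List.getD, List.getElem?_range (Nat.lt_succ_of_le h)]

/-- A recipe `Φ` producing a value from a sequence and a time is non-anticipating if the value at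
time `i` depends only on the entries up to time `i`. -/
def NonAnticipating {β : Type} (Φ : (ℕ → α) → ℕ → β) : Prop :=
  ∀ ⦃π π' : ℕ → α⦄ ⦃i : ℕ⦄, Set.EqOn π π' (Set.Iic i) → Φ π i = Φ π' i

lemma NonAnticipating.exists_seq {Φ : (ℕ → α) → ℕ → α} (hΦ : NonAnticipating Φ) (a : α) :
    ∃ π : ℕ → α, π 0 = a ∧ ∀ i, π (i + 1) = Φ π i := by
  let stage : ℕ → ℕ → α :=
    Nat.rec (fun _ => a) fun i π => Function.update π (i + 1) (Φ π i)
  have stage_stable : ∀ j k, j ≤ k → stage k j = stage j j := by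
    intro j k hjk
    induction k, hjk using Nat.le_induction with
    | base => rfl
    | succ k hk ih =>
      exact (Function.update_of_ne (by omega) _ _).trans ih
  refine ⟨fun i => stage i i, rfl, fun i => ?_⟩
  calc stage (i + 1) (i + 1) = Φ (stage i) i := Function.update_self ..
    _ = Φ (fun j => stage j j) i := hΦ fun j hj => stage_stable j i hj

end History

section Strategy

variable {G : GameGraph V}

lemma EveLegal.edge {σ : List V → V} (hσ : G.EveLegal σ) {π : ℕ → V} {i : ℕ}
    (hi : π i ∈ G.Eve) : G.E (π i) (σ (prefixList π i)) := by
  rw [prefixList_eq_concat]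
  exact hσ _ _ hi

/-- A history determines a sequence only up to its last entry, so `F` is only ever evaluated at
some continuation `π'` of the history. An illegal proposal of `F` is not binding. -/
lemma eveWins_of_proposal {Win : (ℕ → V) → Prop} (F : (ℕ → V) → ℕ → V)
    (hwin : ∀ π, G.IsPlay π →
      (∀ i, π i ∈ G.Eve → ∃ π', Set.EqOn π π' (Set.Iic i) ∧
        (G.E (π i) (F π' i) → π (i + 1) = F π' i)) → Win π) :
    G.EveWins Win := by
  classical
  let extend (l : List V) (j : ℕ) : V := l.getD j G.init
  let proposal (l : List V) : V := F (extend l) (l.length - 1)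
  let σ (l : List V) : V :=
    let v := l.getLastD G.init
    if G.E v (proposal l) then proposal l else (G.succ v).choose
  have σ_legal (l : List V) : G.E (l.getLastD G.init) (σ l) := by
    dsimp only [σ]
    split_ifs with h
    · exact h
    · exact (G.succ _).choose_spec
  refine ⟨σ, fun l v _ => by simpa using σ_legal (l ++ [v]), fun π hπ hc => ?_⟩
  refine hwin π hπ fun i hi =>
    ⟨extend (prefixList π i), fun j hj => (prefixList_getD hj _).symm, fun hE => ?_⟩
  have hlen : (prefixList π i).length - 1 = i := by simp [prefixList]
  have hlast : (prefixList π i).getLastD G.init = π i := by simp [prefixList_eq_concat]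
  rw [hc i hi]
  simp only [σ, proposal, hlen, hlast]
  exact if_pos hE

end Strategy

section MeanPayoff

variable {G : GameGraph V} {π π' : ℕ → V}

/-- The excess of the first `k` steps of `π` over the target mean `p`: the total weight minus
`p * k`. -/
def excess (G : GameGraph V) (p : ℤ) (π : ℕ → V) (k : ℕ) : ℤ :=
  G.partialSum π k - p * k

lemma excess_zero (p : ℤ) : G.excess p π 0 = 0 := by
  simp [excess, partialSum]

lemma excess_succ (p : ℤ) (k : ℕ) :
    G.excess p π (k + 1) = G.excess p π k + (G.w (π k) (π (k + 1)) - p) := by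
  simp only [excess, partialSum, Finset.sum_range_succ]
  push_cast
  ring

lemma nonAnticipating_excess (p : ℤ) : NonAnticipating (G.excess p) := by
  intro π π' k h
  simp only [excess, partialSum]
  congr 1
  refine Finset.sum_congr rfl fun j hj => ?_
  have hj : j < k := Finset.mem_range.1 hj
  rw [h hj.le, h (Nat.succ_le_of_lt hj)]

lemma MP_eq_of_eventually_w_eq {c : ℤ} (h : ∀ᶠ i in atTop, G.w (π i) (π (i + 1)) = c) :
    G.MP π = c := by
  have hw : Tendsto (fun i => (G.w (π i) (π (i + 1)) : ℝ)) atTop (nhds c) :=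
    tendsto_const_nhds.congr' (h.mono fun i hi => congrArg Int.cast hi.symm)
  refine (hw.cesaro.congr fun k => ?_).liminf_eq
  rw [partialSum, Int.cast_sum, div_eq_inv_mul]

lemma MP_eq_of_excess {p : ℤ} (hnonneg : ∀ᶠ k in atTop, 0 ≤ G.excess p π k)
    (hzero : ∃ᶠ k in atTop, G.excess p π k = 0) : G.MP π = p := by
  have mean_sub (k : ℕ) (hk : 0 < k) :
      (G.partialSum π k : ℝ) / k = p + G.excess p π k / k := by
    rw [excess]
    push_cast
    field_simp
    ring
  have hlow : ∀ᶠ k : ℕ in atTop, (p : ℝ) ≤ G.partialSum π k / k := by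
    filter_upwards [hnonneg, eventually_gt_atTop 0] with k hk hk0
    rw [mean_sub k hk0, le_add_iff_nonneg_right]
    positivity
  have hup : ∃ᶠ k : ℕ in atTop, (G.partialSum π k : ℝ) / k ≤ p :=
    (hzero.and_eventually (eventually_gt_atTop 0)).mono fun k ⟨hk, hk0⟩ => by
      simp [mean_sub k hk0, hk]
  exact le_antisymm (liminf_le_of_frequently_le hup ⟨_, hlow⟩)
    (le_liminf_of_le (IsCobounded.of_frequently_le hup) hlow)

end MeanPayoff

section Parity

/-- `p` is the least value taken infinitely often by `f`. If `f` tends to infinity, there is no such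
`p`, whereas `liminf f atTop` has the junk value `0`. -/
def LeastRecurring (f : ℕ → ℕ) (p : ℕ) : Prop :=
  (∃ᶠ k in atTop, f k = p) ∧ ∀ᶠ k in atTop, p ≤ f k

lemma exists_leastRecurring {f : ℕ → ℕ} {b : ℕ} (h : ∃ᶠ k in atTop, f k ≤ b) :
    ∃ p, LeastRecurring f p := by
  classical
  have hex : ∃ p, ∃ᶠ k in atTop, f k ≤ p := ⟨b, h⟩
  have hge : ∀ᶠ k in atTop, Nat.find hex ≤ f k := by
    rcases hp : Nat.find hex with _ | q
    · exact Eventually.of_forall fun k => Nat.zero_le _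
    · have := Nat.find_min hex (m := q) (by omega)
      exact (not_frequently.1 this).mono fun k hk => by omega
  have hrecurs : ∃ᶠ k in atTop, f k = Nat.find hex :=
    ((Nat.find_spec hex).and_eventually hge).mono fun k hk => hk.1.antisymm hk.2
  exact ⟨_, hrecurs, hge⟩

lemma parityWin_iff {Ω : V → ℕ} {π : ℕ → V} :
    ParityWin Ω π ↔ ∃ p, Even p ∧ LeastRecurring (fun k => Ω (π k)) p := by
  have recurs_iff (q : ℕ) : (∀ N, ∃ k, N ≤ k ∧ Ω (π k) = q) ↔ ∃ᶠ k in atTop, Ω (π k) = q :=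
    frequently_atTop.symm
  simp only [ParityWin, recurs_iff]
  refine exists_congr fun p => and_congr_right fun _ => and_congr_right fun hp => ⟨fun hmin => ?_,
    fun hge q hq => ?_⟩
  · obtain ⟨q, hq, hge⟩ := exists_leastRecurring (hp.mono fun k hk => hk.le)
    exact hge.mono fun k hk => (hmin q hq).trans hk
  · obtain ⟨k, rfl, hk⟩ := (hq.and_eventually hge).exists
    exact hk

end Parity

end GameGraph

namespace mpOfParity

open GameGraph

variable {V : Type} {G : GameGraph V} {Ω : V → ℕ} {v : V} {t : Fin 3}

section Gadget

/-- Vertices of the gadget game: `Sum.inl v` is an original vertex, `Sum.inr (v, t)` lies in the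
gadget of `v`. -/
abbrev Vertex (V : Type) : Type := V ⊕ V × Fin 3

/-- The vertex of the parity game to which a vertex of the gadget game belongs. -/
def base : Vertex V → V := Sum.elim id Prod.fst

/-- The balancing move inside the gadget of `v` when the current excess over `Ω v` is `D`: enter the
side whose self-loop moves `D` towards zero, loop until `D = 0`, and then leave for `v`. -/
def balance (D : ℤ) (v : V) (t : Fin 3) : Vertex V :=
  if t = 0 then (if 0 < D then Sum.inr (v, 2) else Sum.inr (v, 1))
  else if t = 1 then (if D < 0 then Sum.inr (v, 1) else Sum.inl v)
  else (if 0 < D then Sum.inr (v, 2) else Sum.inl v)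

/-- The invariant of balancing: at a gadget vertex with a self-loop the excess `D` does not have the
sign of that loop, and on leaving the gadget it vanishes. -/
def Compensating (D : ℤ) : Vertex V → Prop
  | Sum.inl _ => D = 0
  | Sum.inr (_, t) => (t = 1 → D ≤ 0) ∧ (t = 2 → 0 ≤ D)

lemma exists_of_E_inl {y : Vertex V} (h : (mpOfParity G Ω).E (Sum.inl v) y) :
    ∃ u, G.E v u ∧ y = Sum.inr (u, 0) := by
  rcases y with y | ⟨u, t⟩
  · exact h.elim
  · exact ⟨u, h.1, by rw [h.2]⟩

lemma base_eq_of_E_inr {y : Vertex V} (h : (mpOfParity G Ω).E (Sum.inr (v, t)) y) :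
    base y = v := by
  rcases y with y | y
  · exact h.1.symm
  · exact h.1.symm

lemma exists_of_E_inr_of_not_isLeft {y : Vertex V} (h : (mpOfParity G Ω).E (Sum.inr (v, t)) y)
    (hy : ¬ y.isLeft) : ∃ s, s ≠ 0 ∧ y = Sum.inr (v, s) ∧ (t ≠ 0 → s = t) := by
  rcases y with y | ⟨u, s⟩
  · exact absurd rfl hy
  · obtain ⟨rfl, h⟩ := h
    refine ⟨s, ?_, rfl, ?_⟩ <;> omega

lemma E_balance (D : ℤ) (v : V) (t : Fin 3) :
    (mpOfParity G Ω).E (Sum.inr (v, t)) (balance D v t) := by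
  fin_cases t <;> simp only [balance] <;> split_ifs <;> simp_all [mpOfParity]

lemma inl_mem_Eve : Sum.inl v ∈ (mpOfParity G Ω).Eve ↔ v ∈ G.Eve := by
  simp [mpOfParity]

lemma inr_mem_Eve : Sum.inr (v, t) ∈ (mpOfParity G Ω).Eve ↔ Even (Ω v) := by
  simp [mpOfParity]

lemma pred_le_w (x y : Vertex V) : (Ω (base x) : ℤ) - 1 ≤ (mpOfParity G Ω).w x y := by
  rcases x with x | ⟨x, t⟩ <;> rcases y with y | ⟨y, s⟩ <;>
    simp only [mpOfParity, base, Sum.elim_inl, Sum.elim_inr, id] <;> grind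

lemma w_self (v : V) (t : Fin 3) :
    (mpOfParity G Ω).w (Sum.inr (v, t)) (Sum.inr (v, t)) = Ω v + 1 ∨
      (mpOfParity G Ω).w (Sum.inr (v, t)) (Sum.inr (v, t)) = Ω v - 1 := by
  by_cases h : t = 1 <;> simp [mpOfParity, h]

lemma Compensating.balance {D : ℤ} (h : Compensating D (Sum.inr (v, t))) :
    Compensating (D + ((mpOfParity G Ω).w (Sum.inr (v, t)) (balance D v t) - Ω v))
      (balance D v t) := by
  fin_cases t <;> simp only [mpOfParity.balance] <;> split_ifs <;>
    simp_all [mpOfParity, Compensating] <;> omega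

lemma excess_nonneg_of_balance {D : ℤ} (h : 0 ≤ D) :
    0 ≤ D + ((mpOfParity G Ω).w (Sum.inr (v, t)) (balance D v t) - Ω v) := by
  fin_cases t <;> simp only [balance] <;> split_ifs <;> simp_all [mpOfParity] <;> omega

lemma natAbs_excess_lt_of_balance_eq {D : ℤ}
    (h : balance D v t = Sum.inr (v, t)) :
    (D + ((mpOfParity G Ω).w (Sum.inr (v, t)) (Sum.inr (v, t)) - Ω v)).natAbs < D.natAbs := by
  fin_cases t <;> simp only [balance] at h <;> split_ifs at h <;> simp_all [mpOfParity] <;> omega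

end Gadget

section Balances

variable {π : ℕ → Vertex V} {p : ℕ}

/-- In `π`, every move inside a gadget of priority `p` is the balancing move. -/
def Balances (G : GameGraph V) (Ω : V → ℕ) (π : ℕ → Vertex V) (p : ℕ) : Prop :=
  ∀ i v t, Ω v = p → π i = Sum.inr (v, t) →
    π (i + 1) = balance ((mpOfParity G Ω).excess p π i) v t

lemma Balances.compensating (hb : Balances G Ω π p) (hπ : (mpOfParity G Ω).IsPlay π) {i : ℕ}
    (hi : Ω (base (π i)) = p) : Compensating ((mpOfParity G Ω).excess p π i) (π i) := by
  induction i with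
  | zero =>
    rw [hπ.1, excess_zero]
    rfl
  | succ i ih =>
    have hE := hπ.2 i
    rcases hx : π i with u | ⟨u, t⟩ <;> rw [hx] at hE
    · obtain ⟨y, -, hy⟩ := exists_of_E_inl hE
      simp [hy, Compensating]
    · rw [base_eq_of_E_inr hE] at hi
      rw [hx] at ih
      rw [excess_succ, hb i u t hi hx, hx, ← hi]
      exact (hi ▸ ih hi).balance

lemma Balances.excess_succ_nonneg (hb : Balances G Ω π p) {i : ℕ} (hp : p ≤ Ω (base (π i)))
    (h : 0 ≤ (mpOfParity G Ω).excess p π i) : 0 ≤ (mpOfParity G Ω).excess p π (i + 1) := by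
  rw [excess_succ]
  rcases hp.eq_or_lt with rfl | hlt
  · rcases hx : π i with u | ⟨u, t⟩
    · simpa [hx, mpOfParity, base] using h
    · have hux : Ω u = Ω (base (π i)) := by rw [hx]; rfl
      rw [hb i u t hux hx, ← hux]
      exact excess_nonneg_of_balance (hux ▸ h)
  · have := pred_le_w (G := G) (Ω := Ω) (π i) (π (i + 1))
    omega

theorem MP_eq_of_balances (hb : Balances G Ω π p) (hπ : (mpOfParity G Ω).IsPlay π)
    (hge : ∀ᶠ i in atTop, p ≤ Ω (base (π i)))
    (hvisit : ∃ᶠ i in atTop, (π i).isLeft ∧ Ω (base (π i)) = p) :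
    (mpOfParity G Ω).MP π = p := by
  have hzero : ∃ᶠ i in atTop, (mpOfParity G Ω).excess p π i = 0 :=
    hvisit.mono fun i ⟨hleft, hp⟩ => by
      have hD := hb.compensating hπ hp
      obtain ⟨v, hv⟩ := Sum.isLeft_iff.1 hleft
      rwa [hv] at hD
  obtain ⟨N, hN⟩ := eventually_atTop.1 hge
  obtain ⟨M, hM, hM0⟩ := frequently_atTop.1 hzero N
  have hnonneg : ∀ i ≥ M, 0 ≤ (mpOfParity G Ω).excess p π i := by
    intro i hi
    induction i, hi using Nat.le_induction with
    | base => exact hM0.ge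
    | succ i hi ih => exact hb.excess_succ_nonneg (hN i (hM.trans hi)) ih
  exact_mod_cast MP_eq_of_excess (eventually_atTop.2 ⟨M, hnonneg⟩) hzero

end Balances

section Trapped

variable {π : ℕ → Vertex V}

lemma exists_eventually_eq_inr (hπ : (mpOfParity G Ω).IsPlay π)
    (h : ∀ᶠ i in atTop, ¬ (π i).isLeft) :
    ∃ v t, ∀ᶠ i in atTop, π i = Sum.inr (v, t) := by
  obtain ⟨N, hN⟩ := eventually_atTop.1 h
  have step {i : ℕ} (hi : N ≤ i) {v t} (hx : π i = Sum.inr (v, t)) :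
      ∃ s, s ≠ 0 ∧ π (i + 1) = Sum.inr (v, s) ∧ (t ≠ 0 → s = t) :=
    exists_of_E_inr_of_not_isLeft (hx ▸ hπ.2 i) (hN _ (by omega))
  obtain ⟨⟨v, t⟩, hx⟩ := Sum.isRight_iff.1 (Sum.not_isLeft.1 (hN N le_rfl))
  obtain ⟨s, hs, hy, -⟩ := step le_rfl hx
  refine ⟨v, s, eventually_atTop.2 ⟨N + 1, fun i hi => ?_⟩⟩
  induction i, hi using Nat.le_induction with
  | base => exact hy
  | succ i hi ih =>
    obtain ⟨r, -, hr, hrs⟩ := step (by omega) ih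
    rw [hr, hrs hs]

lemma MP_eq_of_eventually_eq_inr (h : ∀ᶠ i in atTop, π i = Sum.inr (v, t)) :
    (mpOfParity G Ω).MP π = ((Ω v + 1 : ℤ) : ℝ) ∨
      (mpOfParity G Ω).MP π = ((Ω v - 1 : ℤ) : ℝ) := by
  have hw : ∀ᶠ i in atTop, (mpOfParity G Ω).w (π i) (π (i + 1)) =
      (mpOfParity G Ω).w (Sum.inr (v, t)) (Sum.inr (v, t)) := by
    filter_upwards [h, (tendsto_add_atTop_nat 1).eventually h] with i hi hi'
    rw [hi, hi']
  rw [MP_eq_of_eventually_w_eq hw]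
  exact (w_self v t).imp (congrArg _) (congrArg _)

lemma not_balances_of_eventually_eq_inr (h : ∀ᶠ i in atTop, π i = Sum.inr (v, t)) :
    ¬ Balances G Ω π (Ω v) := by
  intro hb
  obtain ⟨N, hN⟩ := eventually_atTop.1 h
  let D (k : ℕ) : ℤ := (mpOfParity G Ω).excess (Ω v) π (N + k)
  have hdecr : StrictAnti fun k => (D k).natAbs := by
    refine strictAnti_nat_of_succ_lt fun k => ?_
    have hx := hN (N + k) (by omega)
    have hy := hN (N + k + 1) (by omega)
    have hmove := hb (N + k) v t rfl hx
    have hlt := natAbs_excess_lt_of_balance_eq (G := G) (Ω := Ω) (hmove.symm.trans hy)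
    simpa only [D, ← add_assoc, excess_succ, hx, hy] using hlt
  exact not_strictAnti_of_wellFoundedLT _ hdecr

end Trapped

section Trace

variable {π : ℕ → Vertex V} {ρ : ℕ → V} {i : ℕ}

/-- The number of original vertices in `π` strictly before time `i`. -/
def clock (π : ℕ → Vertex V) (i : ℕ) : ℕ := Nat.count (fun j => (π j).isLeft) i

/-- The time of visit number `m` (counting from zero) of `π` to an original vertex. -/
noncomputable def visit (π : ℕ → Vertex V) (m : ℕ) : ℕ := Nat.nth (fun j => (π j).isLeft) m

/-- `ρ` is the play of the parity game traced by `π`. A gadget vertex belongs to the original vertex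
that comes next, hence the index `clock π i`. -/
def Traces (π : ℕ → Vertex V) (ρ : ℕ → V) : Prop :=
  ∀ i, base (π i) = ρ (clock π i)

lemma monotone_clock : Monotone (clock π) := Nat.count_monotone _

lemma clock_succ_of_inl (h : π i = Sum.inl v) : clock π (i + 1) = clock π i + 1 := by
  simp [clock, Nat.count_succ, h]

lemma clock_succ_of_inr {x : V × Fin 3} (h : π i = Sum.inr x) : clock π (i + 1) = clock π i := by
  simp [clock, Nat.count_succ, h]

lemma nonAnticipating_clock : NonAnticipating (clock (V := V)) := by
  intro π π' i h
  simp only [clock, Nat.count_eq_card_filter_range]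
  congr 1
  refine Finset.filter_congr fun j hj => ?_
  rw [h (Finset.mem_range.1 hj).le]

lemma visit_clock (h : (π i).isLeft) : visit π (clock π i) = i :=
  Nat.nth_count (p := fun j => ((π j).isLeft : Prop)) h

lemma clock_visit (hinf : ∃ᶠ i in atTop, (π i).isLeft) (m : ℕ) : clock π (visit π m) = m :=
  Nat.count_nth_of_infinite (Nat.frequently_atTop_iff_infinite.1 hinf) m

lemma isLeft_visit (hinf : ∃ᶠ i in atTop, (π i).isLeft) (m : ℕ) : (π (visit π m)).isLeft :=
  Nat.nth_mem_of_infinite (Nat.frequently_atTop_iff_infinite.1 hinf) m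

lemma tendsto_visit (hinf : ∃ᶠ i in atTop, (π i).isLeft) : Tendsto (visit π) atTop atTop :=
  (Nat.nth_strictMono (Nat.frequently_atTop_iff_infinite.1 hinf)).tendsto_atTop

lemma tendsto_clock (hinf : ∃ᶠ i in atTop, (π i).isLeft) : Tendsto (clock π) atTop atTop :=
  tendsto_atTop_atTop_of_monotone monotone_clock fun m => ⟨visit π m, (clock_visit hinf m).ge⟩

lemma le_visit_clock (hinf : ∃ᶠ i in atTop, (π i).isLeft) (i : ℕ) : i ≤ visit π (clock π i) :=
  Nat.le_nth_count (Nat.frequently_atTop_iff_infinite.1 hinf) i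

lemma exists_traces (hπ : (mpOfParity G Ω).IsPlay π) (hinf : ∃ᶠ i in atTop, (π i).isLeft) :
    ∃ ρ, Traces π ρ := by
  have base_eq (d : ℕ) : ∀ i, visit π (clock π i) = i + d → base (π i) = base (π (i + d)) := by
    induction d with
    | zero => exact fun _ _ => rfl
    | succ d ih =>
      intro i hi
      rcases hx : π i with u | ⟨u, t⟩
      · have := visit_clock (π := π) (i := i) (by simp [hx])
        omega
      · rw [← clock_succ_of_inr hx] at hi
        have hnext := ih (i + 1) (by omega)
        rwa [base_eq_of_E_inr (hx ▸ hπ.2 i), add_right_comm] at hnext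
  refine ⟨fun m => base (π (visit π m)), fun i => ?_⟩
  obtain ⟨d, hd⟩ := Nat.exists_eq_add_of_le (le_visit_clock hinf i)
  exact (base_eq d i hd).trans (congrArg (fun j => base (π j)) hd.symm)

lemma Traces.eq_of_inl (htr : Traces π ρ) (h : π i = Sum.inl v) : ρ (clock π i) = v := by
  rw [← htr i, h]
  rfl

lemma Traces.apply_visit (htr : Traces π ρ) (hinf : ∃ᶠ i in atTop, (π i).isLeft) (m : ℕ) :
    π (visit π m) = Sum.inl (ρ m) := by
  obtain ⟨v, hv⟩ := Sum.isLeft_iff.1 (isLeft_visit hinf m)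
  rw [hv, ← htr.eq_of_inl hv, clock_visit hinf]

lemma Traces.exists_edge (htr : Traces π ρ) (hπ : (mpOfParity G Ω).IsPlay π)
    (h : π i = Sum.inl v) : G.E v (ρ (clock π i + 1)) ∧
      π (i + 1) = Sum.inr (ρ (clock π i + 1), 0) := by
  obtain ⟨u, hu, hy⟩ := exists_of_E_inl (h ▸ hπ.2 i)
  have : u = ρ (clock π i + 1) := by
    rw [← clock_succ_of_inl h, ← htr (i + 1), hy]
    rfl
  exact this ▸ ⟨hu, hy⟩

lemma Traces.isPlay (htr : Traces π ρ) (hπ : (mpOfParity G Ω).IsPlay π)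
    (hinf : ∃ᶠ i in atTop, (π i).isLeft) : G.IsPlay ρ := by
  refine ⟨htr.eq_of_inl (i := 0) hπ.1, fun m => ?_⟩
  have h := (htr.exists_edge hπ (htr.apply_visit hinf m)).1
  rwa [clock_visit hinf] at h

lemma Traces.filterMap_prefixList (htr : Traces π ρ) (h : (π i).isLeft) :
    (prefixList π i).filterMap Sum.getLeft? = prefixList ρ (clock π i) := by
  have key (k : ℕ) : ((List.range k).map π).filterMap Sum.getLeft? =
      (List.range (clock π k)).map ρ := by
    induction k with
    | zero => simp [clock]
    | succ k ih =>
      rw [List.range_succ, List.map_append, List.filterMap_append, ih]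
      rcases hx : π k with u | x
      · simp [clock_succ_of_inl hx, List.range_succ, htr.eq_of_inl hx, hx]
      · simp [clock_succ_of_inr hx, hx]
  obtain ⟨v, hv⟩ := Sum.isLeft_iff.1 h
  rw [prefixList_eq_map_range, key, clock_succ_of_inl hv, prefixList_eq_map_range]

theorem Traces.MP_eq_of_leastRecurring {p : ℕ} (htr : Traces π ρ)
    (hπ : (mpOfParity G Ω).IsPlay π) (hinf : ∃ᶠ i in atTop, (π i).isLeft)
    (hp : LeastRecurring (fun k => Ω (ρ k)) p) (hb : Balances G Ω π p) :
    (mpOfParity G Ω).MP π = p := by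
  refine MP_eq_of_balances hb hπ ?_ ?_
  · simpa only [htr _] using (tendsto_clock hinf).eventually hp.2
  · refine (tendsto_visit hinf).frequently (hp.1.mono fun m hm => ⟨isLeft_visit hinf m, ?_⟩)
    rwa [htr, clock_visit hinf]

end Trace

section Lift

variable {σ : List V → V} {π : ℕ → Vertex V} {i : ℕ}

/-- Eve's move in the gadget game when she plays `σ` on the original vertices visited so far and
balances inside the gadgets. -/
def liftMove (G : GameGraph V) (Ω : V → ℕ) (σ : List V → V) (π : ℕ → Vertex V) (i : ℕ) :
    Vertex V :=
  match π i with
  | Sum.inl _ => Sum.inr (σ ((prefixList π i).filterMap Sum.getLeft?), 0)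
  | Sum.inr (v, t) => balance ((mpOfParity G Ω).excess (Ω v) π i) v t

lemma nonAnticipating_liftMove : NonAnticipating (liftMove G Ω σ) := by
  intro π π' i h
  have hi : π i = π' i := h Set.self_mem_Iic
  simp only [liftMove, hi, prefixList_congr h, nonAnticipating_excess _ h]

lemma E_liftMove (hσ : G.EveLegal σ) (h : π i ∈ (mpOfParity G Ω).Eve) :
    (mpOfParity G Ω).E (π i) (liftMove G Ω σ π i) := by
  simp only [liftMove, prefixList_eq_concat]
  rcases hx : π i with v | ⟨v, t⟩
  · refine ⟨?_, rfl⟩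
    simpa [List.filterMap_append] using hσ _ v (inl_mem_Eve.1 (hx ▸ h))
  · exact E_balance _ v t

/-- `π` is a play in which Eve moves as prescribed by `liftMove`. -/
def FollowsLift (G : GameGraph V) (Ω : V → ℕ) (σ : List V → V) (π : ℕ → Vertex V) : Prop :=
  (mpOfParity G Ω).IsPlay π ∧ ∀ i, π i ∈ (mpOfParity G Ω).Eve → π (i + 1) = liftMove G Ω σ π i

lemma FollowsLift.balances (hπ : FollowsLift G Ω σ π) {p : ℕ} (hp : Even p) :
    Balances G Ω π p := by
  rintro i v t rfl hx
  rw [hπ.2 i (hx ▸ inr_mem_Eve.2 hp), liftMove, hx]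

lemma FollowsLift.consEve (hπ : FollowsLift G Ω σ π) {ρ : ℕ → V} (htr : Traces π ρ)
    (hinf : ∃ᶠ i in atTop, (π i).isLeft) : G.ConsEve σ ρ := by
  intro m hm
  have hx := htr.apply_visit hinf m
  have hmove := hπ.2 (visit π m) (hx ▸ inl_mem_Eve.2 hm)
  rw [(htr.exists_edge hπ.1 hx).2, liftMove, hx,
    htr.filterMap_prefixList (isLeft_visit hinf m), clock_visit hinf] at hmove
  simpa using hmove

lemma eveWins_of_forall_followsLift {Win : (ℕ → Vertex V) → Prop} (hσ : G.EveLegal σ)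
    (hwin : ∀ π, FollowsLift G Ω σ π → Win π) : (mpOfParity G Ω).EveWins Win := by
  refine eveWins_of_proposal (liftMove G Ω σ) fun π hπ hc => hwin π ⟨hπ, fun i hi => ?_⟩
  obtain ⟨π', hagree, hmove⟩ := hc i hi
  rw [← nonAnticipating_liftMove hagree] at hmove
  exact hmove (E_liftMove hσ hi)

end Lift

section Simulation

variable {τ : List (Vertex V) → Vertex V} {ρ ρ' : ℕ → V} {π π' : ℕ → Vertex V} {i : ℕ}

/-- The next vertex of a simulation of `ρ` in the gadget game: original vertices move on to the next
entry of `ρ`, gadgets of even priority follow `τ`, and gadgets of odd priority balance. -/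
def simMove (G : GameGraph V) (Ω : V → ℕ) (τ : List (Vertex V) → Vertex V) (ρ : ℕ → V)
    (π : ℕ → Vertex V) (i : ℕ) : Vertex V :=
  match π i with
  | Sum.inl _ => Sum.inr (ρ (clock π i + 1), 0)
  | Sum.inr (v, t) =>
    if Even (Ω v) then τ (prefixList π i) else balance ((mpOfParity G Ω).excess (Ω v) π i) v t

/-- `π` is the simulation of `ρ` in the gadget game against `τ`. -/
def Simulates (G : GameGraph V) (Ω : V → ℕ) (τ : List (Vertex V) → Vertex V) (ρ : ℕ → V)
    (π : ℕ → Vertex V) : Prop :=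
  π 0 = Sum.inl (ρ 0) ∧ ∀ i, π (i + 1) = simMove G Ω τ ρ π i

lemma nonAnticipating_simMove : NonAnticipating (simMove G Ω τ ρ) := by
  intro π π' i h
  have hi : π i = π' i := h Set.self_mem_Iic
  simp only [simMove, hi, prefixList_congr h, nonAnticipating_excess _ h,
    nonAnticipating_clock h]

lemma exists_simulates (G : GameGraph V) (Ω : V → ℕ) (τ : List (Vertex V) → Vertex V)
    (ρ : ℕ → V) : ∃ π, Simulates G Ω τ ρ π :=
  nonAnticipating_simMove.exists_seq (Sum.inl (ρ 0))

lemma Simulates.eqOn (hπ : Simulates G Ω τ ρ π) (hπ' : Simulates G Ω τ ρ' π')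
    (h : Set.EqOn ρ ρ' (Set.Iic (clock π i))) : Set.EqOn π π' (Set.Iic i) := by
  induction i with
  | zero =>
    intro j hj
    obtain rfl : j = 0 := Nat.le_zero.1 hj
    rw [hπ.1, hπ'.1, h (Nat.zero_le _)]
  | succ i ih =>
    have hle : clock π i ≤ clock π (i + 1) := monotone_clock i.le_succ
    have hi := ih (h.mono (Set.Iic_subset_Iic.2 hle))
    intro j hj
    rcases Nat.le_succ_iff.1 hj with hj | rfl
    · exact hi hj
    rw [hπ.2, hπ'.2, ← nonAnticipating_simMove hi]
    rcases hx : π i with u | x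
    · simp only [simMove, hx]
      rw [h (clock_succ_of_inl hx).ge]
    · simp only [simMove, hx]

lemma Simulates.apply_succ_of_inl (hπ : Simulates G Ω τ ρ π) {v : V} (hx : π i = Sum.inl v) :
    π (i + 1) = Sum.inr (ρ (clock π i + 1), 0) := by
  rw [hπ.2, simMove, hx]

lemma Simulates.apply_succ_of_even (hπ : Simulates G Ω τ ρ π) (hx : π i = Sum.inr (v, t))
    (hv : Even (Ω v)) : π (i + 1) = τ (prefixList π i) := by
  rw [hπ.2, simMove, hx]
  exact if_pos hv

lemma Simulates.balances (hπ : Simulates G Ω τ ρ π) {p : ℕ} (hp : ¬ Even p) :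
    Balances G Ω π p := by
  rintro i v t rfl hx
  rw [hπ.2, simMove, hx]
  exact if_neg hp

lemma Simulates.E_inr (hπ : Simulates G Ω τ ρ π) (hτ : (mpOfParity G Ω).EveLegal τ)
    (hx : π i = Sum.inr (v, t)) : (mpOfParity G Ω).E (Sum.inr (v, t)) (π (i + 1)) := by
  by_cases hv : Even (Ω v)
  · rw [hπ.apply_succ_of_even hx hv, ← hx]
    exact hτ.edge (hx ▸ inr_mem_Eve.2 hv)
  · rw [hπ.balances hv i v t rfl hx]
    exact E_balance _ v t

lemma Simulates.traces (hπ : Simulates G Ω τ ρ π) (hτ : (mpOfParity G Ω).EveLegal τ) :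
    Traces π ρ := by
  intro i
  induction i with
  | zero =>
    rw [hπ.1]
    rfl
  | succ i ih =>
    rcases hx : π i with u | ⟨u, t⟩
    · rw [hπ.apply_succ_of_inl hx, clock_succ_of_inl hx]
      rfl
    · rw [clock_succ_of_inr hx, ← ih, hx, base_eq_of_E_inr (hπ.E_inr hτ hx)]
      rfl

lemma Simulates.isPlay (hπ : Simulates G Ω τ ρ π) (hτ : (mpOfParity G Ω).EveLegal τ)
    (hρ : G.IsPlay ρ) : (mpOfParity G Ω).IsPlay π := by
  refine ⟨by rw [hπ.1, hρ.1]; rfl, fun i => ?_⟩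
  rcases hx : π i with u | ⟨u, t⟩
  · rw [hπ.apply_succ_of_inl hx, ← (hπ.traces hτ).eq_of_inl hx]
    exact ⟨hρ.2 _, rfl⟩
  · exact hπ.E_inr hτ hx

/-- Eve's proposal in the parity game: the vertex towards which `τ` moves in the simulation of `ρ`,
at visit number `m` to an original vertex. -/
noncomputable def projMove (G : GameGraph V) (Ω : V → ℕ) (τ : List (Vertex V) → Vertex V)
    (ρ : ℕ → V) (m : ℕ) : V :=
  let π := (exists_simulates G Ω τ ρ).choose
  base (τ (prefixList π (visit π m)))

lemma Simulates.projMove_eq (hπ : Simulates G Ω τ ρ π)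
    (h : Set.EqOn ρ ρ' (Set.Iic (clock π i))) (hleft : (π i).isLeft) :
    projMove G Ω τ ρ' (clock π i) = base (τ (prefixList π i)) := by
  have hagree := hπ.eqOn (exists_simulates G Ω τ ρ').choose_spec h
  simp only [projMove]
  rw [nonAnticipating_clock hagree, visit_clock (hagree Set.self_mem_Iic ▸ hleft),
    prefixList_congr hagree]

lemma Simulates.consEve (hπ : Simulates G Ω τ ρ π) (hτ : (mpOfParity G Ω).EveLegal τ)
    (hc : ∀ m, ρ m ∈ G.Eve → ∃ ρ', Set.EqOn ρ ρ' (Set.Iic m) ∧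
      (G.E (ρ m) (projMove G Ω τ ρ' m) → ρ (m + 1) = projMove G Ω τ ρ' m)) :
    (mpOfParity G Ω).ConsEve τ π := by
  intro i hi
  rcases hx : π i with v | ⟨v, t⟩
  · have hv := (hπ.traces hτ).eq_of_inl hx
    obtain ⟨u, hu, hy⟩ := exists_of_E_inl (hx ▸ hτ.edge hi)
    obtain ⟨ρ', hagree, hmove⟩ := hc (clock π i) (hv ▸ inl_mem_Eve.1 (hx ▸ hi))
    have hproj : projMove G Ω τ ρ' (clock π i) = u := by
      rw [hπ.projMove_eq hagree (by simp [hx]), hy]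
      rfl
    rw [hv, hproj] at hmove
    rw [hy, hπ.apply_succ_of_inl hx, hmove hu]
  · exact hπ.apply_succ_of_even hx (inr_mem_Eve.1 (hx ▸ hi))

lemma eveWins_of_forall_simulates {Win : (ℕ → V) → Prop} (hτ : (mpOfParity G Ω).EveLegal τ)
    (hwin : ∀ ρ π, G.IsPlay ρ → Simulates G Ω τ ρ π → (mpOfParity G Ω).ConsEve τ π → Win ρ) :
    G.EveWins Win := by
  refine eveWins_of_proposal (projMove G Ω τ) fun ρ hρ hc => ?_
  obtain ⟨π, hπ⟩ := exists_simulates G Ω τ ρ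
  exact hwin ρ π hρ hπ (hπ.consEve hτ hc)

end Simulation

section Value

variable {π : ℕ → Vertex V} {n : ℕ} {I : Set ℝ}

lemma intCast_mem_biUnion_Ico_iff (hn : Even n) {z : ℤ} (hz : z ∈ Set.Icc (-1) (n + 1 : ℤ)) :
    (z : ℝ) ∈ (⋃ i ∈ Finset.range (n / 2 + 1),
      Set.Ico ((2 * i : ℕ) : ℝ) (((2 * i : ℕ) : ℝ) + 1)) ↔ Even z := by
  obtain ⟨h1, h2⟩ := hz
  have mem_Ico_iff (i : ℕ) :
      (z : ℝ) ∈ Set.Ico ((2 * i : ℕ) : ℝ) (((2 * i : ℕ) : ℝ) + 1) ↔ z = 2 * i := by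
    rw [Set.mem_Ico]
    norm_cast
    omega
  simp only [Set.mem_iUnion, mem_Ico_iff, Finset.mem_range, exists_prop]
  constructor
  · rintro ⟨i, -, rfl⟩
    exact even_two_mul _
  · rintro ⟨r, rfl⟩
    obtain ⟨s, rfl⟩ := hn
    exact ⟨r.toNat, by omega, by omega⟩

lemma exists_not_balances_of_trapped (hΩ : ∀ v, Ω v ≤ n)
    (hI : ∀ z ∈ Set.Icc (-1) (n + 1 : ℤ), (z : ℝ) ∈ I ↔ Even z)
    (hπ : (mpOfParity G Ω).IsPlay π) (h : ∀ᶠ i in atTop, ¬ (π i).isLeft) :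
    ∃ p, ¬ Balances G Ω π p ∧ ((mpOfParity G Ω).MP π ∈ I ↔ ¬ Even p) := by
  obtain ⟨v, t, hloop⟩ := exists_eventually_eq_inr hπ h
  refine ⟨Ω v, not_balances_of_eventually_eq_inr hloop, ?_⟩
  have hv := hΩ v
  rcases MP_eq_of_eventually_eq_inr (G := G) (Ω := Ω) hloop with hMP | hMP <;>
    rw [hMP, hI _ ⟨by omega, by omega⟩] <;> simp [parity_simps]

lemma MP_mem_iff_of_leastRecurring (hΩ : ∀ v, Ω v ≤ n)
    (hI : ∀ z ∈ Set.Icc (-1) (n + 1 : ℤ), (z : ℝ) ∈ I ↔ Even z) {ρ : ℕ → V} {p : ℕ}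
    (htr : Traces π ρ) (hπ : (mpOfParity G Ω).IsPlay π)
    (hinf : ∃ᶠ i in atTop, (π i).isLeft) (hp : LeastRecurring (fun k => Ω (ρ k)) p)
    (hb : Balances G Ω π p) : (mpOfParity G Ω).MP π ∈ I ↔ Even p := by
  obtain ⟨k, hk⟩ := hp.1.exists
  have hpn : p ≤ n := hk ▸ hΩ (ρ k)
  rw [htr.MP_eq_of_leastRecurring hπ hinf hp hb, ← Int.cast_natCast,
    hI _ ⟨by omega, by omega⟩, Int.even_coe_nat]

lemma FollowsLift.MP_mem {σ : List V → V} (hΩ : ∀ v, Ω v ≤ n)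
    (hI : ∀ z ∈ Set.Icc (-1) (n + 1 : ℤ), (z : ℝ) ∈ I ↔ Even z)
    (hσ : ∀ ρ, G.IsPlay ρ → G.ConsEve σ ρ → ParityWin Ω ρ)
    (hπ : FollowsLift G Ω σ π) : (mpOfParity G Ω).MP π ∈ I := by
  by_cases hinf : ∃ᶠ i in atTop, (π i).isLeft
  · obtain ⟨ρ, htr⟩ := exists_traces hπ.1 hinf
    have hwin := hσ ρ (htr.isPlay hπ.1 hinf) (hπ.consEve htr hinf)
    obtain ⟨p, heven, hp⟩ := parityWin_iff.1 hwin
    exact (MP_mem_iff_of_leastRecurring hΩ hI htr hπ.1 hinf hp (hπ.balances heven)).2 heven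
  · obtain ⟨p, hb, hmem⟩ :=
      exists_not_balances_of_trapped hΩ hI hπ.1 (not_frequently.1 hinf)
    exact hmem.2 (mt hπ.balances hb)

lemma Simulates.parityWin {τ : List (Vertex V) → Vertex V} {ρ : ℕ → V} (hΩ : ∀ v, Ω v ≤ n)
    (hI : ∀ z ∈ Set.Icc (-1) (n + 1 : ℤ), (z : ℝ) ∈ I ↔ Even z)
    (hτ : (mpOfParity G Ω).EveLegal τ) (hρ : G.IsPlay ρ) (hπ : Simulates G Ω τ ρ π)
    (hmem : (mpOfParity G Ω).MP π ∈ I) : ParityWin Ω ρ := by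
  have hplay := hπ.isPlay hτ hρ
  by_cases hinf : ∃ᶠ i in atTop, (π i).isLeft
  · obtain ⟨p, hp⟩ := exists_leastRecurring (Frequently.of_forall fun k => hΩ (ρ k))
    refine parityWin_iff.2 ⟨p, by_contra fun hodd => hodd ?_, hp⟩
    exact (MP_mem_iff_of_leastRecurring hΩ hI (hπ.traces hτ) hplay hinf hp
      (hπ.balances hodd)).1 hmem
  · obtain ⟨p, hb, hiff⟩ :=
      exists_not_balances_of_trapped hΩ hI hplay (not_frequently.1 hinf)
    exact absurd (hπ.balances (hiff.1 hmem)) hb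

end Value

end mpOfParity

open GameGraph mpOfParity in
theorem stmt7_general {V : Type} (G : GameGraph V) (Ω : V → ℕ) (n : ℕ) (hΩ : ∀ v, Ω v ≤ n)
    (I : Set ℝ) (hI : ∀ z ∈ Set.Icc (-1) (n + 1 : ℤ), (z : ℝ) ∈ I ↔ Even z) :
    G.EveWins (ParityWin Ω) ↔ (mpOfParity G Ω).EveWins (fun π => (mpOfParity G Ω).MP π ∈ I) := by
  constructor
  · rintro ⟨σ, hσ, hwin⟩
    exact eveWins_of_forall_followsLift hσ fun π hπ => hπ.MP_mem hΩ hI hwin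
  · rintro ⟨τ, hτ, hwin⟩
    exact eveWins_of_forall_simulates hτ fun ρ π hρ hπ hc =>
      hπ.parityWin hΩ hI hτ hρ (hwin π (hπ.isPlay hτ hρ) hc)

/-- Let `(G, Ω)` be a min-parity game with priorities in
`[0, |V|]` and let `n` be the smallest even integer with `n ≥ |V|`.  Eve wins the
parity game iff she wins the interval mean-payoff game of the gadget construction,
with `I = [0,1) ∪ [2,3) ∪ ⋯ ∪ [n, n+1)`. -/
theorem stmt7 {V : Type} [Fintype V] (G : GameGraph V) (Ω : V → ℕ)
    (hΩ : ∀ v, Ω v ≤ Fintype.card V)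
    (n : ℕ) (hn : Even n) (hn' : Fintype.card V ≤ n)
    (hnmin : ∀ m : ℕ, Even m → Fintype.card V ≤ m → n ≤ m)
    (I : Set ℝ)
    (hI : I = ⋃ i ∈ Finset.range (n / 2 + 1),
        Set.Ico ((2 * i : ℕ) : ℝ) (((2 * i : ℕ) : ℝ) + 1)) :
    G.EveWins (GameGraph.ParityWin Ω) ↔
      (mpOfParity G Ω).EveWins (fun π => (mpOfParity G Ω).MP π ∈ I) := by
  subst hI
  exact stmt7_general G Ω n (fun v => (hΩ v).trans hn') _
    fun _ hz => mpOfParity.intCast_mem_biUnion_Ico_iff hn hz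
end
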